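/- Let G=(V,E) be an exchange network with n nodes and weights w_e ∈ [0,1], such that the LP relaxation of maximum weight matching admits a unique optimum, which is integral and corresponds to matching M*, with LP gap g > 0. Fix κ∈(0,1). Then for any initial condition α^0 ∈ [0,1]^{2|E|}, setting T* = 100 n⁴/(π κ(1−κ) g²) (which is O(n⁴/g²)), for every t ≥ T* the iterate α^t of the natural dynamics induces the matching M*, and (γ^t, M*) is a (6/√(π κ(1−κ) t))-NB solution. -/

import Mathlib

namespace EN

open Finset

variable {V : Type*}

/-- The nonnegative part `(x)₊ = max (x, 0)`. -/
noncomputable def pos (x : ℝ) : ℝ := max x 0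

variable [Fintype V] [DecidableEq V]

/-- The maximum of `f` over a finite set of vertices (`0` over the empty set). -/
noncomputable def fmax (s : Finset V) (f : V → ℝ) : ℝ := ⨆ k ∈ s, f k

/-- The offer from `i` to `j` given messages `α` and weights `w`:
`m_{i→j} = (w_{ij} − α_{i\j})₊ − (1/2) (w_{ij} − α_{i\j} − α_{j\i})₊`. -/
noncomputable def offer (w α : V → V → ℝ) (i j : V) : ℝ :=
  pos (w i j - α i j) - (1 / 2) * pos (w i j - α i j - α j i)

/-- The update operator `T` of the natural dynamics:
`(Tα)_{i\j} = max_{k ∈ ∂i \ j} m_{k→i}`. -/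
noncomputable def upd (G : SimpleGraph V) [DecidableRel G.Adj] (w α : V → V → ℝ)
    (i j : V) : ℝ :=
  fmax ((G.neighborFinset i).erase j) fun k => offer w α k i

/-- The earnings estimate `γ_i = max_{k ∈ ∂i} m_{k→i}`. -/
noncomputable def earn (G : SimpleGraph V) [DecidableRel G.Adj] (w α : V → V → ℝ)
    (i : V) : ℝ :=
  fmax (G.neighborFinset i) fun k => offer w α k i

/-- Exchange network weights: symmetric and positive on every edge. -/
def GoodW (G : SimpleGraph V) (w : V → V → ℝ) : Prop :=
  (∀ i j, w i j = w j i) ∧ ∀ i j, G.Adj i j → 0 < w i j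

/-- A valid message vector: nonnegative on all directed edges. -/
def ValidMsg (G : SimpleGraph V) (α : V → V → ℝ) : Prop :=
  ∀ i j, G.Adj i j → 0 ≤ α i j

/-- Fixed point of the natural-dynamics update operator. -/
def IsFixedPt (G : SimpleGraph V) [DecidableRel G.Adj] (w α : V → V → ℝ) : Prop :=
  ∀ i j, G.Adj i j → upd G w α i j = α i j

/-- `ε`-fixed point. -/
def IsEpsFixedPt (G : SimpleGraph V) [DecidableRel G.Adj] (w α : V → V → ℝ) (ε : ℝ) : Prop :=
  ∀ i j, G.Adj i j → |α i j - upd G w α i j| ≤ ε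

/-- The natural dynamics with damping factor `κ`: `α^{t+1} = (1−κ) α^t + κ T α^t`. -/
noncomputable def dyn (G : SimpleGraph V) [DecidableRel G.Adj] (w : V → V → ℝ) (κ : ℝ)
    (α0 : V → V → ℝ) : ℕ → V → V → ℝ
  | 0 => α0
  | t + 1 => fun i j =>
      (1 - κ) * dyn G w κ α0 t i j + κ * upd G w (dyn G w κ α0 t) i j

/-- Sup norm over directed edges. -/
noncomputable def msgSup (G : SimpleGraph V) [DecidableRel G.Adj] (f : V → V → ℝ) : ℝ :=
  ⨆ p : V × V, if G.Adj p.1 p.2 then |f p.1 p.2| else 0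

/-- `M` is a matching of `G`: a symmetric subrelation of adjacency pairing each node
with at most one partner. -/
structure IsMatching (G : SimpleGraph V) (M : V → V → Prop) : Prop where
  subset : ∀ i j, M i j → G.Adj i j
  symm : ∀ i j, M i j → M j i
  unique : ∀ i j k, M i j → M i k → j = k

/-- `(M, γ)` is a trade outcome. -/
def IsOutcome (G : SimpleGraph V) (w : V → V → ℝ) (M : V → V → Prop) (γ : V → ℝ) : Prop :=
  IsMatching G M ∧ (∀ i, 0 ≤ γ i) ∧ (∀ i j, M i j → γ i + γ j = w i j) ∧
    ∀ i, (∀ j, ¬M i j) → γ i = 0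

/-- Stability of an outcome. -/
def Stable (G : SimpleGraph V) (w : V → V → ℝ) (M : V → V → Prop) (γ : V → ℝ) : Prop :=
  ∀ i j, G.Adj i j → ¬M i j → w i j ≤ γ i + γ j

/-- The best alternative of `i` excluding `j`: `max_{k ∈ ∂i \ j} (w_{ik} − γ_k)₊`. -/
noncomputable def bestAlt (G : SimpleGraph V) [DecidableRel G.Adj] (w : V → V → ℝ)
    (γ : V → ℝ) (i j : V) : ℝ :=
  fmax ((G.neighborFinset i).erase j) fun k => pos (w i k - γ k)

/-- Balance of an outcome. -/
def Balanced (G : SimpleGraph V) [DecidableRel G.Adj] (w : V → V → ℝ) (M : V → V → Prop)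
    (γ : V → ℝ) : Prop :=
  ∀ i j, M i j → γ i - bestAlt G w γ i j = γ j - bestAlt G w γ j i

/-- Nash bargaining solution: a stable and balanced trade outcome. -/
def IsNBSolution (G : SimpleGraph V) [DecidableRel G.Adj] (w : V → V → ℝ)
    (M : V → V → Prop) (γ : V → ℝ) : Prop :=
  IsOutcome G w M γ ∧ Stable G w M γ ∧ Balanced G w M γ

/-- `ε`-balance. -/
def EpsBalanced (G : SimpleGraph V) [DecidableRel G.Adj] (w : V → V → ℝ)
    (M : V → V → Prop) (γ : V → ℝ) (ε : ℝ) : Prop :=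
  ∀ i j, M i j → |(γ i - bestAlt G w γ i j) - (γ j - bestAlt G w γ j i)| ≤ ε

/-- `ε`-Nash bargaining solution. -/
def IsEpsNB (G : SimpleGraph V) [DecidableRel G.Adj] (w : V → V → ℝ)
    (M : V → V → Prop) (γ : V → ℝ) (ε : ℝ) : Prop :=
  IsOutcome G w M γ ∧ Stable G w M γ ∧ EpsBalanced G w M γ ε

/-- Feasible point of the LP relaxation of maximum weight matching. -/
def LPFeasible (G : SimpleGraph V) [DecidableRel G.Adj] (x : V → V → ℝ) : Prop :=
  (∀ i j, x i j = x j i) ∧ (∀ i j, 0 ≤ x i j) ∧ (∀ i j, ¬G.Adj i j → x i j = 0) ∧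
    ∀ i, ∑ j ∈ G.neighborFinset i, x i j ≤ 1

/-- LP objective `Σ_{(i,j)∈E} w_{ij} x_{ij}` (each undirected edge counted once). -/
noncomputable def LPval (G : SimpleGraph V) [DecidableRel G.Adj] (w x : V → V → ℝ) : ℝ :=
  (1 / 2) * ∑ i, ∑ j ∈ G.neighborFinset i, w i j * x i j

/-- Optimal point of the LP relaxation of maximum weight matching. -/
def LPOptimal (G : SimpleGraph V) [DecidableRel G.Adj] (w x : V → V → ℝ) : Prop :=
  LPFeasible G x ∧ ∀ y, LPFeasible G y → LPval G w y ≤ LPval G w x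

def Integral (x : V → V → ℝ) : Prop := ∀ i j, x i j = 0 ∨ x i j = 1

def HalfIntegral (x : V → V → ℝ) : Prop := ∀ i j, x i j = 0 ∨ x i j = 1 / 2 ∨ x i j = 1

open Classical in
/-- The LP point associated to a matching. -/
noncomputable def mInd (M : V → V → Prop) (i j : V) : ℝ := if M i j then 1 else 0

/-- The state with offers `m` induces the matching `M`: every node receiving a positive
offer is matched and receives its unique best offer from its partner, and every node
with zero earnings is unmatched. -/
def Induces (G : SimpleGraph V) [DecidableRel G.Adj] (m : V → V → ℝ)
    (M : V → V → Prop) : Prop :=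
  IsMatching G M ∧
    (∀ i, (∃ k, G.Adj i k ∧ 0 < m k i) →
      ∃ j, M i j ∧ ∀ k, G.Adj i k → k ≠ j → m k i < m j i) ∧
    ∀ i, (fmax (G.neighborFinset i) fun k => m k i) = 0 → ∀ j, ¬M i j

/-- Feasibility for the dual LP. -/
def DualFeasible (G : SimpleGraph V) (w : V → V → ℝ) (y : V → ℝ) : Prop :=
  (∀ i, 0 ≤ y i) ∧ ∀ i j, G.Adj i j → w i j ≤ y i + y j

/-- Optimality for the dual LP. -/
def DualOptimal (G : SimpleGraph V) (w : V → V → ℝ) (y : V → ℝ) : Prop :=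
  DualFeasible G w y ∧ ∀ z, DualFeasible G w z → ∑ i, y i ≤ ∑ i, z i

/-- The unmatched balance property at every edge. -/
def UnmatchedBalance (G : SimpleGraph V) [DecidableRel G.Adj] (w : V → V → ℝ)
    (y : V → ℝ) : Prop :=
  ∀ i j, G.Adj i j → y i - bestAlt G w y i j = y j - bestAlt G w y j i

/-! ### Unequal division -/

/-- Valid split fractions: `r_{ij} ∈ (0,1)` with `r_{ij} + r_{ji} = 1` on every edge. -/
def GoodR (G : SimpleGraph V) (r : V → V → ℝ) : Prop :=
  ∀ i j, G.Adj i j → 0 < r i j ∧ r i j < 1 ∧ r i j + r j i = 1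

/-- The UD offer from `i` to `j`. -/
noncomputable def offerUD (w r α : V → V → ℝ) (i j : V) : ℝ :=
  pos (w i j - α i j) - r i j * pos (w i j - α i j - α j i)

/-- The UD update operator. -/
noncomputable def updUD (G : SimpleGraph V) [DecidableRel G.Adj] (w r α : V → V → ℝ)
    (i j : V) : ℝ :=
  fmax ((G.neighborFinset i).erase j) fun k => offerUD w r α k i

/-- The UD earnings estimate. -/
noncomputable def earnUD (G : SimpleGraph V) [DecidableRel G.Adj] (w r α : V → V → ℝ)
    (i : V) : ℝ :=
  fmax (G.neighborFinset i) fun k => offerUD w r α k i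

/-- Fixed point of the UD update operator. -/
def IsFixedPtUD (G : SimpleGraph V) [DecidableRel G.Adj] (w r α : V → V → ℝ) : Prop :=
  ∀ i j, G.Adj i j → updUD G w r α i j = α i j

/-- Correct division. -/
def CorrectDiv (G : SimpleGraph V) [DecidableRel G.Adj] (w r : V → V → ℝ)
    (M : V → V → Prop) (γ : V → ℝ) : Prop :=
  ∀ i j, M i j →
    (1 / r i j) * (γ i - bestAlt G w γ i j) = (1 / r j i) * (γ j - bestAlt G w γ j i)

/-- UD solution: a stable trade outcome satisfying correct division. -/
def IsUDSolution (G : SimpleGraph V) [DecidableRel G.Adj] (w r : V → V → ℝ)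
    (M : V → V → Prop) (γ : V → ℝ) : Prop :=
  IsOutcome G w M γ ∧ Stable G w M γ ∧ CorrectDiv G w r M γ

/-- Edge surplus. -/
noncomputable def surp (G : SimpleGraph V) [DecidableRel G.Adj] (w : V → V → ℝ)
    (γ : V → ℝ) (i j : V) : ℝ :=
  w i j - bestAlt G w γ i j - bestAlt G w γ j i

open Classical in
/-- The rebalanced allocation `γ^reb`. -/
noncomputable def reb (G : SimpleGraph V) [DecidableRel G.Adj] (w r : V → V → ℝ)
    (M : V → V → Prop) (γ : V → ℝ) (i : V) : ℝ :=
  if h : ∃ j, M i j then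
    bestAlt G w γ i h.choose + r i h.choose * surp G w γ i h.choose
  else 0

/-- The Edge Rebalancing iteration `γ^{t+1} = κ γ^reb(γ^t) + (1−κ) γ^t`. -/
noncomputable def rebIter (G : SimpleGraph V) [DecidableRel G.Adj] (w r : V → V → ℝ)
    (M : V → V → Prop) (κ : ℝ) (γ0 : V → ℝ) : ℕ → V → ℝ
  | 0 => γ0
  | t + 1 => fun i =>
      κ * reb G w r M (rebIter G w r M κ γ0 t) i + (1 - κ) * rebIter G w r M κ γ0 t i

/-!
The update operator is nonexpansive for the sup norm over directed edges and preserves a box of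
messages, so by the Baillon–Bruck rate the damped iterate `α^t` is an `ε`-fixed point with
`ε = 1 / √(π κ (1 - κ) t)`. At an `ε`-fixed point, a violation of the desired structure (a matched
edge without slack, an unmatched vertex with positive earnings, an unstable edge) starts alternating
walks along nearly tied best offers. Along a walk, swapping the edges outside the matching for those
inside changes the LP value by the telescoping difference of earnings, up to `O(n² ε)`; following
each walk until it dies out or closes up yields a direction of the LP polytope that loses only
`O(n² ε)`, whereas every such direction must lose at least the LP gap. Hence none of the violations
occurs once `n² ε ≪ g`.
-/

/-! ### The Baillon–Bruck rate -/

section BaillonBruck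

/-- The lazy shift operator on functions on `ℤ`: stay put with weight `1 - κ`, move by `s` with
weight `κ`. -/
def lazyShift (κ : ℝ) (s : ℤ) (f : ℤ → ℝ) (d : ℤ) : ℝ :=
  (1 - κ) * f d + κ * f (d + s)

/-- The comparison function of the Baillon–Bruck argument. For a `κ`-averaged nonexpansive
iteration `x` on a set of diameter at most `B`, its values at `0` and `1` bound
`‖x m - x n‖ / B` and `‖x m - T (x n)‖ / B` for `m ≤ n`. -/
def comparison (κ : ℝ) (m n : ℕ) : ℤ → ℝ :=
  (lazyShift κ (-1))^[m] ((lazyShift κ 1)^[n] fun d ↦ (d.sign : ℝ))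

/-- The Fourier integral of the `n`-step transition probability from `0` to `d` of the random walk
on `ℤ` whose steps are differences of two independent Bernoulli(`κ`) variables. -/
noncomputable def walkProb (κ : ℝ) (n : ℕ) (d : ℤ) : ℝ :=
  1 / Real.pi * ∫ θ in (0 : ℝ)..Real.pi,
    (1 - 2 * (κ * (1 - κ)) * (1 - Real.cos θ)) ^ n * Real.cos (d * θ)

theorem lazyShift_commute (κ : ℝ) (s t : ℤ) :
    Function.Commute (lazyShift κ s) (lazyShift κ t) := by
  intro f
  funext d
  simp only [lazyShift, add_right_comm d s t]
  ring

theorem comparison_succ_left (κ : ℝ) (m n : ℕ) :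
    comparison κ (m + 1) n = lazyShift κ (-1) (comparison κ m n) := by
  simp only [comparison, Function.iterate_succ_apply']

theorem comparison_succ_right (κ : ℝ) (m n : ℕ) :
    comparison κ m (n + 1) = lazyShift κ 1 (comparison κ m n) := by
  simp only [comparison, Function.iterate_succ_apply']
  exact (lazyShift_commute κ (-1) 1).iterate_left m _

theorem comparison_neg (κ : ℝ) (m n : ℕ) (d : ℤ) :
    comparison κ m n (-d) = -comparison κ n m d := by
  induction m generalizing n d with
  | zero =>
    induction n generalizing d with
    | zero => simp only [comparison, Function.iterate_zero, id, Int.sign_neg, Int.cast_neg]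
    | succ n ih =>
      rw [comparison_succ_right, comparison_succ_left, lazyShift, lazyShift, ih,
        show -d + 1 = -(d + -1) by ring, ih]
      ring
  | succ m ih =>
    rw [comparison_succ_right, comparison_succ_left, lazyShift, lazyShift, ih, ← neg_add, ih]
    ring

theorem comparison_self_zero (κ : ℝ) (n : ℕ) : comparison κ n n 0 = 0 := by
  have h := comparison_neg κ n n 0
  rw [neg_zero] at h
  linarith

theorem comparison_zero_of_pos (κ : ℝ) (n : ℕ) {d : ℤ} (hd : 0 < d) :
    comparison κ 0 n d = 1 := by
  induction n generalizing d with
  | zero =>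
    simp only [comparison, Function.iterate_zero, id, Int.sign_eq_one_of_pos hd, Int.cast_one]
  | succ n ih => rw [comparison_succ_right, lazyShift, ih hd, ih (by lia)]; ring

theorem comparison_self_succ (κ : ℝ) (n : ℕ) (d : ℤ) :
    comparison κ (n + 1) (n + 1) d = ((1 - κ) ^ 2 + κ ^ 2) * comparison κ n n d +
      κ * (1 - κ) * (comparison κ n n (d - 1) + comparison κ n n (d + 1)) := by
  rw [comparison_succ_left, comparison_succ_right]
  simp only [lazyShift, ← sub_eq_add_neg, sub_add_cancel]
  ring

theorem integral_cos_int_mul (d : ℤ) :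
    ∫ θ in (0 : ℝ)..Real.pi, Real.cos (d * θ) = if d = 0 then Real.pi else 0 := by
  split_ifs with h
  · simp [h]
  · have hd : (d : ℝ) ≠ 0 := Int.cast_ne_zero.mpr h
    rw [intervalIntegral.integral_comp_mul_left (fun x ↦ Real.cos x) hd]
    simp [Real.sin_int_mul_pi]

theorem walkProb_zero (κ : ℝ) (d : ℤ) : walkProb κ 0 d = if d = 0 then 1 else 0 := by
  simp only [walkProb, pow_zero, one_mul, integral_cos_int_mul, mul_ite, mul_zero,
    one_div_mul_cancel Real.pi_ne_zero]

theorem intervalIntegrable_walkProb (κ : ℝ) (n : ℕ) (d : ℤ) :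
    IntervalIntegrable
      (fun θ : ℝ ↦ (1 - 2 * (κ * (1 - κ)) * (1 - Real.cos θ)) ^ n * Real.cos (d * θ))
      MeasureTheory.volume 0 Real.pi :=
  Continuous.intervalIntegrable (by fun_prop) _ _

theorem walkProb_succ (κ : ℝ) (n : ℕ) (d : ℤ) :
    walkProb κ (n + 1) d = ((1 - κ) ^ 2 + κ ^ 2) * walkProb κ n d +
      κ * (1 - κ) * (walkProb κ n (d - 1) + walkProb κ n (d + 1)) := by
  have hint := intervalIntegrable_walkProb κ n
  have hcos (θ : ℝ) : Real.cos ((d - 1 : ℤ) * θ) + Real.cos ((d + 1 : ℤ) * θ) =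
      2 * Real.cos (d * θ) * Real.cos θ := by
    push_cast
    rw [sub_mul, add_mul, one_mul, Real.cos_sub, Real.cos_add]
    ring
  rw [walkProb, walkProb, walkProb, walkProb, ← mul_add, mul_left_comm _ (1 / Real.pi),
    mul_left_comm _ (1 / Real.pi), ← mul_add, ← intervalIntegral.integral_add (hint _) (hint _),
    ← intervalIntegral.integral_const_mul ((1 - κ) ^ 2 + κ ^ 2),
    ← intervalIntegral.integral_const_mul (κ * (1 - κ)),
    ← intervalIntegral.integral_add ((hint _).const_mul _) (((hint _).add (hint _)).const_mul _)]
  congr 2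
  funext θ
  rw [← mul_add, hcos]
  ring

theorem comparison_self_add_one_sub (κ : ℝ) (n : ℕ) (d : ℤ) :
    comparison κ n n (d + 1) - comparison κ n n d = walkProb κ n d + walkProb κ n (d + 1) := by
  induction n generalizing d with
  | zero =>
    simp only [comparison, Function.iterate_zero, id, walkProb_zero]
    rcases lt_trichotomy d (-1) with hd | rfl | hd
    · rw [Int.sign_eq_neg_one_of_neg (by lia), Int.sign_eq_neg_one_of_neg (by lia),
        if_neg (by lia), if_neg (by lia)]
      simp
    · simp
    · rw [Int.sign_eq_one_of_pos (by lia), if_neg (by lia : d + 1 ≠ 0)]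
      obtain rfl | hd := (Int.lt_iff_add_one_le.mp hd).eq_or_lt
      · simp
      · rw [Int.sign_eq_one_of_pos (by lia), if_neg (by lia)]
        simp
  | succ n ih =>
    have h₀ := ih (d - 1)
    have h₁ := ih d
    have h₂ := ih (d + 1)
    rw [comparison_self_succ, comparison_self_succ, walkProb_succ, walkProb_succ]
    rw [sub_add_cancel] at h₀
    rw [add_sub_cancel_right]
    linear_combination ((1 - κ) ^ 2 + κ ^ 2) * h₁ + κ * (1 - κ) * (h₀ + h₂)

theorem integral_exp_neg_mul_sq_le {b : ℝ} (hb : 0 < b) :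
    ∫ s in (0 : ℝ)..1, Real.exp (-b * s ^ 2) ≤ √(Real.pi / b) / 2 := by
  rw [← integral_gaussian_Ioi, intervalIntegral.integral_of_le zero_le_one]
  exact MeasureTheory.setIntegral_mono_set (integrable_exp_neg_mul_sq hb).integrableOn
    (Filter.Eventually.of_forall fun x ↦ (Real.exp_pos _).le)
    Set.Ioc_subset_Ioi_self.eventuallyLE

theorem integral_exp_neg_mul_sin_half_sq (b : ℝ) :
    ∫ θ in (0 : ℝ)..Real.pi, Real.exp (-b * Real.sin (θ / 2) ^ 2) * (2 * Real.cos (θ / 2)) =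
      4 * ∫ s in (0 : ℝ)..1, Real.exp (-b * s ^ 2) := by
  have hderiv (θ : ℝ) : HasDerivAt (fun θ ↦ Real.sin (θ / 2)) (Real.cos (θ / 2) * (1 / 2)) θ :=
    ((hasDerivAt_id θ).div_const 2).sin
  have hsubst := intervalIntegral.integral_comp_mul_deriv (a := 0) (b := Real.pi)
    (g := fun s ↦ Real.exp (-b * s ^ 2)) (fun θ _ ↦ hderiv θ) (by fun_prop) (by fun_prop)
  rw [zero_div, Real.sin_zero, Real.sin_pi_div_two] at hsubst
  rw [← hsubst, ← intervalIntegral.integral_const_mul]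
  congr 1
  funext θ
  simp only [Function.comp_apply]
  ring

theorem walk_integrand_le_exp {p θ : ℝ} (hp : p ∈ Set.Icc (0 : ℝ) (1 / 4))
    (hθ : θ ∈ Set.Icc 0 Real.pi) (n : ℕ) :
    (1 - 2 * p * (1 - Real.cos θ)) ^ n * (1 + Real.cos θ) ≤
      Real.exp (-(4 * p * n) * Real.sin (θ / 2) ^ 2) * (2 * Real.cos (θ / 2)) := by
  obtain ⟨hp0, hp4⟩ := hp
  have hsin : 1 - Real.cos θ = 2 * Real.sin (θ / 2) ^ 2 := by
    rw [Real.sin_sq_eq_half_sub, mul_div_cancel₀ θ two_ne_zero]; ring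
  have hcos : 1 + Real.cos θ = 2 * Real.cos (θ / 2) ^ 2 := by
    rw [Real.cos_sq, mul_div_cancel₀ θ two_ne_zero]; ring
  have hcos_nonneg : 0 ≤ Real.cos (θ / 2) :=
    Real.cos_nonneg_of_mem_Icc ⟨by linarith [hθ.1, Real.pi_pos], by linarith [hθ.2]⟩
  have hbase : 0 ≤ 1 - 2 * p * (1 - Real.cos θ) := by
    rw [hsin]; linarith [mul_le_of_le_one_right hp0 (Real.sin_sq_le_one (θ / 2))]
  refine mul_le_mul ?_ ?_ (by linarith [Real.neg_one_le_cos θ]) (Real.exp_pos _).le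
  · calc (1 - 2 * p * (1 - Real.cos θ)) ^ n
        ≤ Real.exp (-(2 * p * (1 - Real.cos θ))) ^ n :=
          pow_le_pow_left₀ hbase (Real.one_sub_le_exp_neg _) n
      _ = Real.exp (-(4 * p * n) * Real.sin (θ / 2) ^ 2) := by
          rw [← Real.exp_nat_mul, hsin]; congr 1; ring
  · rw [hcos, sq]
    gcongr
    exact mul_le_of_le_one_left hcos_nonneg (Real.cos_le_one _)

theorem walkProb_zero_add_walkProb_one_le {κ : ℝ} (hκ : κ ∈ Set.Ioo (0 : ℝ) 1) {n : ℕ}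
    (hn : 0 < n) : walkProb κ n 0 + walkProb κ n 1 ≤ 1 / √(Real.pi * κ * (1 - κ) * n) := by
  have hκ' : 0 < κ * (1 - κ) := mul_pos hκ.1 (sub_pos.mpr hκ.2)
  have hpi := Real.pi_pos
  rw [walkProb, walkProb, ← mul_add, ← intervalIntegral.integral_add
    (intervalIntegrable_walkProb κ n 0) (intervalIntegrable_walkProb κ n 1)]
  simp only [Int.cast_zero, zero_mul, Real.cos_zero, Int.cast_one, one_mul, ← mul_add]
  calc 1 / Real.pi * ∫ θ in (0 : ℝ)..Real.pi,
          (1 - 2 * (κ * (1 - κ)) * (1 - Real.cos θ)) ^ n * (1 + Real.cos θ)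
      ≤ 1 / Real.pi * ∫ θ in (0 : ℝ)..Real.pi,
          Real.exp (-(4 * (κ * (1 - κ)) * n) * Real.sin (θ / 2) ^ 2) * (2 * Real.cos (θ / 2)) := by
        gcongr
        refine intervalIntegral.integral_mono_on hpi.le
          (Continuous.intervalIntegrable (by fun_prop) _ _)
          (Continuous.intervalIntegrable (by fun_prop) _ _) fun θ hθ ↦
            walk_integrand_le_exp ⟨hκ'.le, ?_⟩ hθ n
        nlinarith [sq_nonneg (κ - 1 / 2)]
    _ ≤ 1 / Real.pi * (4 * (√(Real.pi / (4 * (κ * (1 - κ)) * n)) / 2)) := by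
        rw [integral_exp_neg_mul_sin_half_sq]
        gcongr
        exact integral_exp_neg_mul_sq_le (by positivity)
    _ = 1 / √(Real.pi * κ * (1 - κ) * n) := by
        rw [show Real.pi / (4 * (κ * (1 - κ)) * n) =
            (Real.pi / 2) ^ 2 / (Real.pi * κ * (1 - κ) * n) by field_simp; ring,
          Real.sqrt_div (by positivity), Real.sqrt_sq (by positivity)]
        field_simp
        ring

variable {E : Type*} [AddCommGroup E] [Module ℝ E] {p : Seminorm ℝ E} {C : Set E} {T : E → E}
  {κ B : ℝ} {x : ℕ → E}

theorem krasnoselskii_mem (hC : Convex ℝ C) (hT : Set.MapsTo T C C)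
    (hκ : κ ∈ Set.Icc (0 : ℝ) 1) (hx0 : x 0 ∈ C)
    (hx : ∀ t, x (t + 1) = (1 - κ) • x t + κ • T (x t)) (t : ℕ) : x t ∈ C := by
  induction t with
  | zero => exact hx0
  | succ t ih => rw [hx]; exact hC ih (hT ih) (sub_nonneg.mpr hκ.2) hκ.1 (by ring)

theorem seminorm_sub_convex_comb_le (p : Seminorm ℝ E) (hκ : κ ∈ Set.Icc (0 : ℝ) 1) (a b c : E) :
    p (a - ((1 - κ) • b + κ • c)) ≤ (1 - κ) * p (a - b) + κ * p (a - c) := by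
  have hsplit : a - ((1 - κ) • b + κ • c) = (1 - κ) • (a - b) + κ • (a - c) := by module
  rw [hsplit]
  refine (map_add_le_add p _ _).trans_eq ?_
  rw [map_smul_eq_mul, map_smul_eq_mul, Real.norm_of_nonneg (sub_nonneg.mpr hκ.2),
    Real.norm_of_nonneg hκ.1]

theorem krasnoselskii_sub_map_le (hκ : κ ∈ Set.Icc (0 : ℝ) 1)
    (hx : ∀ t, x (t + 1) = (1 - κ) • x t + κ • T (x t))
    (hTx : ∀ m n, p (T (x m) - T (x n)) ≤ p (x m - x n)) (hB : ∀ n, p (x 0 - T (x n)) ≤ B)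
    {m n : ℕ} (hmn : m ≤ n) (hsub : ∀ k ≤ n, p (x k - x n) ≤ B * comparison κ k n 0) :
    p (x m - T (x n)) ≤ B * comparison κ m n 1 := by
  induction m with
  | zero => simpa only [comparison_zero_of_pos κ n one_pos, mul_one] using hB n
  | succ m ih =>
    rw [comparison_succ_left, lazyShift, hx, map_sub_rev]
    have h₁ := ih (by lia)
    have h₂ := (hTx m n).trans (hsub m (by lia))
    rw [map_sub_rev] at h₁ h₂
    calc p (T (x n) - ((1 - κ) • x m + κ • T (x m)))
        ≤ (1 - κ) * p (T (x n) - x m) + κ * p (T (x n) - T (x m)) :=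
          seminorm_sub_convex_comb_le p hκ _ _ _
      _ ≤ (1 - κ) * (B * comparison κ m n 1) + κ * (B * comparison κ m n 0) :=
          add_le_add (mul_le_mul_of_nonneg_left h₁ (sub_nonneg.mpr hκ.2))
            (mul_le_mul_of_nonneg_left h₂ hκ.1)
      _ = B * ((1 - κ) * comparison κ m n 1 + κ * comparison κ m n (1 + -1)) := by
          rw [add_neg_cancel]; ring

theorem krasnoselskii_sub_le (hκ : κ ∈ Set.Icc (0 : ℝ) 1)
    (hx : ∀ t, x (t + 1) = (1 - κ) • x t + κ • T (x t))
    (hTx : ∀ m n, p (T (x m) - T (x n)) ≤ p (x m - x n)) (hB : ∀ n, p (x 0 - T (x n)) ≤ B)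
    {m n : ℕ} (hmn : m ≤ n) : p (x m - x n) ≤ B * comparison κ m n 0 := by
  induction n generalizing m with
  | zero => obtain rfl := Nat.le_zero.mp hmn; simp [comparison_self_zero]
  | succ n ih =>
    obtain rfl | hlt := hmn.eq_or_lt
    · simp [comparison_self_zero]
    have hm : m ≤ n := by lia
    rw [comparison_succ_right, lazyShift, hx]
    calc p (x m - ((1 - κ) • x n + κ • T (x n)))
        ≤ (1 - κ) * p (x m - x n) + κ * p (x m - T (x n)) :=
          seminorm_sub_convex_comb_le p hκ _ _ _
      _ ≤ (1 - κ) * (B * comparison κ m n 0) + κ * (B * comparison κ m n 1) :=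
          add_le_add (mul_le_mul_of_nonneg_left (ih hm) (sub_nonneg.mpr hκ.2))
            (mul_le_mul_of_nonneg_left
              (krasnoselskii_sub_map_le hκ hx hTx hB hm fun k hk ↦ ih hk) hκ.1)
      _ = B * ((1 - κ) * comparison κ m n 0 + κ * comparison κ m n (0 + 1)) := by
          rw [zero_add]; ring

theorem krasnoselskii_residual_le (hC : Convex ℝ C) (hT : Set.MapsTo T C C)
    (hTp : ∀ y ∈ C, ∀ z ∈ C, p (T y - T z) ≤ p (y - z))
    (hB : ∀ y ∈ C, ∀ z ∈ C, p (y - z) ≤ B) (hκ : κ ∈ Set.Ioo (0 : ℝ) 1) (hx0 : x 0 ∈ C)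
    (hx : ∀ t, x (t + 1) = (1 - κ) • x t + κ • T (x t)) {n : ℕ} (hn : 0 < n) :
    p (x n - T (x n)) ≤ B / √(Real.pi * κ * (1 - κ) * n) := by
  have hκ' := Set.Ioo_subset_Icc_self hκ
  have hmem := krasnoselskii_mem hC hT hκ' hx0 hx
  have hB0 : 0 ≤ B := (apply_nonneg p _).trans (hB _ hx0 _ hx0)
  have hTx (m n : ℕ) := hTp (x m) (hmem m) (x n) (hmem n)
  have hBx (n : ℕ) := hB (x 0) hx0 (T (x n)) (hT (hmem n))
  have hdiag := comparison_self_add_one_sub κ n 0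
  rw [zero_add, comparison_self_zero, sub_zero] at hdiag
  calc p (x n - T (x n)) ≤ B * comparison κ n n 1 :=
        krasnoselskii_sub_map_le hκ' hx hTx hBx le_rfl fun k hk ↦
          krasnoselskii_sub_le hκ' hx hTx hBx hk
    _ ≤ B * (1 / √(Real.pi * κ * (1 - κ) * n)) := by
        rw [hdiag]
        exact mul_le_mul_of_nonneg_left (walkProb_zero_add_walkProb_one_le hκ hn) hB0
    _ = B / √(Real.pi * κ * (1 - κ) * n) := mul_one_div _ _

end BaillonBruck

/-! ### The natural dynamics is an averaged nonexpansive iteration -/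

section FiniteMax

variable {V : Type*} {s : Finset V} {f h : V → ℝ} {c : ℝ} {k : V}

theorem le_fmax (f : V → ℝ) (hk : k ∈ s) : f k ≤ fmax s f := by
  have hsup {k : V} (hk : k ∈ s) : ⨆ _ : k ∈ s, f k = f k := ciSup_pos hk
  have hbdd : BddAbove (Set.range fun k ↦ ⨆ _ : k ∈ s, f k) := by
    refine (((s.finite_toSet.image f).union (Set.finite_singleton 0)).subset ?_).bddAbove
    rintro _ ⟨k, rfl⟩
    by_cases hk : k ∈ s
    · exact Or.inl ⟨k, hk, (hsup hk).symm⟩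
    · have : IsEmpty (k ∈ s) := isEmpty_Prop.mpr hk
      exact Or.inr (Real.iSup_of_isEmpty _)
  exact (hsup hk).symm.trans_le (le_ciSup hbdd k)

theorem fmax_le (hc : 0 ≤ c) (hf : ∀ k ∈ s, f k ≤ c) : fmax s f ≤ c :=
  Real.iSup_le (fun k ↦ Real.iSup_le (hf k) hc) hc

theorem fmax_nonneg (hf : ∀ k ∈ s, 0 ≤ f k) : 0 ≤ fmax s f :=
  Real.iSup_nonneg fun k ↦ Real.iSup_nonneg (hf k)

theorem exists_eq_fmax_of_pos (hpos : 0 < fmax s f) : ∃ k ∈ s, f k = fmax s f := by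
  obtain rfl | hs := s.eq_empty_or_nonempty
  · exact absurd hpos (fmax_le le_rfl (by simp)).not_gt
  obtain ⟨k, hk, hmax⟩ := s.exists_max_image f hs
  have hle : fmax s f ≤ max (f k) 0 :=
    fmax_le (le_max_right _ _) fun l hl ↦ (hmax l hl).trans (le_max_left _ _)
  obtain hle | hle := le_max_iff.mp hle
  · exact ⟨k, hk, (le_fmax f hk).antisymm hle⟩
  · exact absurd hpos hle.not_gt

theorem fmax_le_fmax_add (hc : 0 ≤ c) (hh : ∀ k ∈ s, 0 ≤ h k) (hfh : ∀ k ∈ s, f k ≤ h k + c) :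
    fmax s f ≤ fmax s h + c :=
  fmax_le (add_nonneg (fmax_nonneg hh) hc) fun k hk ↦
    (hfh k hk).trans (add_le_add_left (le_fmax h hk) c)

theorem abs_fmax_sub_fmax_le (hc : 0 ≤ c) (hf : ∀ k ∈ s, 0 ≤ f k) (hh : ∀ k ∈ s, 0 ≤ h k)
    (hfh : ∀ k ∈ s, |f k - h k| ≤ c) : |fmax s f - fmax s h| ≤ c :=
  abs_sub_le_iff.mpr
    ⟨sub_le_iff_le_add'.mpr <| fmax_le_fmax_add hc hh fun k hk ↦
        sub_le_iff_le_add'.mp (abs_sub_le_iff.mp (hfh k hk)).1,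
      sub_le_iff_le_add'.mpr <| fmax_le_fmax_add hc hf fun k hk ↦
        sub_le_iff_le_add'.mp (abs_sub_le_iff.mp (hfh k hk)).2⟩

end FiniteMax

section Offers

variable {V : Type*} {w α β : V → V → ℝ} {i j : V} {c : ℝ}

theorem pos_nonneg (x : ℝ) : 0 ≤ pos x :=
  le_max_right x 0

theorem le_pos (x : ℝ) : x ≤ pos x :=
  le_max_left x 0

theorem pos_of_nonneg {x : ℝ} (hx : 0 ≤ x) : pos x = x :=
  max_eq_left hx

theorem pos_of_nonpos {x : ℝ} (hx : x ≤ 0) : pos x = 0 :=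
  max_eq_right hx

theorem abs_pos_sub_pos_le (x y : ℝ) : |pos x - pos y| ≤ |x - y| :=
  abs_max_sub_max_le_abs x y 0

theorem offer_eq_half_add_min (hα : 0 ≤ α j i) :
    offer w α i j = (pos (w i j - α i j) + min (pos (w i j - α i j)) (α j i)) / 2 := by
  rw [offer]
  rcases le_total (w i j - α i j) 0 with hx | hx
  · rw [pos_of_nonpos hx, pos_of_nonpos (by linarith), min_eq_left hα]; ring
  rw [pos_of_nonneg hx]
  rcases le_total (w i j - α i j) (α j i) with hy | hy
  · rw [pos_of_nonpos (sub_nonpos.mpr hy), min_eq_left hy]; ring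
  · rw [pos_of_nonneg (sub_nonneg.mpr hy), min_eq_right hy]; ring

theorem offer_nonneg (hα : 0 ≤ α j i) : 0 ≤ offer w α i j := by
  rw [offer_eq_half_add_min hα]
  have hpos := pos_nonneg (w i j - α i j)
  linarith [le_min hpos hα]

theorem offer_le_pos (w : V → V → ℝ) (hα : 0 ≤ α j i) : offer w α i j ≤ pos (w i j - α i j) := by
  rw [offer_eq_half_add_min hα]
  linarith [min_le_left (pos (w i j - α i j)) (α j i)]

theorem abs_offer_sub_offer_le (hα : 0 ≤ α j i) (hβ : 0 ≤ β j i) (hij : |α i j - β i j| ≤ c)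
    (hji : |α j i - β j i| ≤ c) : |offer w α i j - offer w β i j| ≤ c := by
  rw [offer_eq_half_add_min hα, offer_eq_half_add_min hβ]
  set x := pos (w i j - α i j)
  set y := pos (w i j - β i j)
  have hpos : |x - y| ≤ c := by
    refine (abs_pos_sub_pos_le _ _).trans ?_
    rwa [sub_sub_sub_cancel_left, abs_sub_comm]
  have hmin : |min x (α j i) - min y (β j i)| ≤ c :=
    (abs_min_sub_min_le_max _ _ _ _).trans (max_le hpos hji)
  calc |(x + min x (α j i)) / 2 - (y + min y (β j i)) / 2|
      = |(x - y) + (min x (α j i) - min y (β j i))| / 2 := by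
        rw [← sub_div, abs_div, abs_two, add_sub_add_comm]
    _ ≤ (|x - y| + |min x (α j i) - min y (β j i)|) / 2 := by gcongr; exact abs_add_le _ _
    _ ≤ c := by linarith

end Offers

section Dynamics

variable {V : Type*} {G : SimpleGraph V} {w α β : V → V → ℝ} {B κ c : ℝ}

/-- The box of message vectors with values in `[0, B]` on directed edges. -/
def messageBox (G : SimpleGraph V) (B : ℝ) : Set (V → V → ℝ) :=
  {α | ∀ i j, G.Adj i j → α i j ∈ Set.Icc 0 B}

theorem convex_messageBox (G : SimpleGraph V) (B : ℝ) : Convex ℝ (messageBox G B) :=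
  fun _ hα _ hβ _ _ ha hb hab i j hij ↦ convex_Icc 0 B (hα i j hij) (hβ i j hij) ha hb hab

variable [Fintype V] [DecidableRel G.Adj]

/-- The sup seminorm over directed edges, on message vectors. -/
noncomputable def edgeSeminorm (G : SimpleGraph V) [DecidableRel G.Adj] : Seminorm ℝ (V → V → ℝ) :=
  (normSeminorm ℝ (G.Dart → ℝ)).comp
    (LinearMap.pi fun d ↦ LinearMap.proj d.snd ∘ₗ LinearMap.proj d.fst)

theorem edgeSeminorm_le_iff (hc : 0 ≤ c) :
    edgeSeminorm G α ≤ c ↔ ∀ i j, G.Adj i j → |α i j| ≤ c :=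
  (pi_norm_le_iff_of_nonneg hc).trans ⟨fun h i j hij ↦ h ⟨(i, j), hij⟩, fun h d ↦ h _ _ d.adj⟩

theorem edgeSeminorm_sub_le (hB : 0 ≤ B) (hα : α ∈ messageBox G B) (hβ : β ∈ messageBox G B) :
    edgeSeminorm G (α - β) ≤ B :=
  (edgeSeminorm_le_iff hB).mpr fun i j hij ↦ by
    have h := abs_sub_le_of_le_of_le (hα i j hij).1 (hα i j hij).2 (hβ i j hij).1 (hβ i j hij).2
    rwa [sub_zero] at h

variable [DecidableEq V]

theorem upd_nonneg (hα : ∀ i j, G.Adj i j → 0 ≤ α i j) (i j : V) : 0 ≤ upd G w α i j :=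
  fmax_nonneg fun k hk ↦
    offer_nonneg (hα i k ((G.mem_neighborFinset i k).mp (mem_of_mem_erase hk)))

theorem mapsTo_upd_messageBox (hw : ∀ i j, G.Adj i j → w i j ≤ B) :
    Set.MapsTo (upd G w) (messageBox G B) (messageBox G B) := by
  intro α hα i j hij
  have hB : 0 ≤ B := (hα i j hij).1.trans (hα i j hij).2
  refine ⟨upd_nonneg (fun i j hij ↦ (hα i j hij).1) i j, fmax_le hB fun k hk ↦ ?_⟩
  have hik := (G.mem_neighborFinset i k).mp (mem_of_mem_erase hk)
  exact (offer_le_pos w (hα i k hik).1).trans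
    (max_le (by linarith [hw k i hik.symm, (hα k i hik.symm).1]) hB)

theorem edgeSeminorm_upd_sub_le (hα : α ∈ messageBox G B) (hβ : β ∈ messageBox G B) :
    edgeSeminorm G (upd G w α - upd G w β) ≤ edgeSeminorm G (α - β) := by
  have hc : 0 ≤ edgeSeminorm G (α - β) := apply_nonneg _ _
  have hdist := (edgeSeminorm_le_iff hc).mp le_rfl
  refine (edgeSeminorm_le_iff hc).mpr fun i j _ ↦ ?_
  have hadj {k : V} (hk : k ∈ (G.neighborFinset i).erase j) : G.Adj i k :=
    (G.mem_neighborFinset i k).mp (mem_of_mem_erase hk)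
  exact abs_fmax_sub_fmax_le hc (fun k hk ↦ offer_nonneg (hα i k (hadj hk)).1)
    (fun k hk ↦ offer_nonneg (hβ i k (hadj hk)).1) fun k hk ↦
      abs_offer_sub_offer_le (hα i k (hadj hk)).1 (hβ i k (hadj hk)).1
        (hdist k i (hadj hk).symm) (hdist i k (hadj hk))

theorem dyn_mem_messageBox (hw : ∀ i j, G.Adj i j → w i j ≤ B) (hκ : κ ∈ Set.Icc (0 : ℝ) 1)
    (hα : α ∈ messageBox G B) (t : ℕ) : dyn G w κ α t ∈ messageBox G B :=
  krasnoselskii_mem (convex_messageBox G B) (mapsTo_upd_messageBox hw) hκ hα (fun _ ↦ rfl) t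

theorem isEpsFixedPt_dyn (hB : 0 ≤ B) (hw : ∀ i j, G.Adj i j → w i j ≤ B)
    (hκ : κ ∈ Set.Ioo (0 : ℝ) 1) (hα : α ∈ messageBox G B) {t : ℕ} (ht : 0 < t) :
    IsEpsFixedPt G w (dyn G w κ α t) (B / √(Real.pi * κ * (1 - κ) * t)) :=
  (edgeSeminorm_le_iff (by positivity)).mp <|
    krasnoselskii_residual_le (convex_messageBox G B) (mapsTo_upd_messageBox hw)
      (fun _ hα _ hβ ↦ edgeSeminorm_upd_sub_le hα hβ) (fun _ hα _ hβ ↦ edgeSeminorm_sub_le hB hα hβ)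
      hκ hα (fun _ ↦ rfl) ht

end Dynamics

/-! ### Sharpness of the LP optimum -/

section LinearProgram

variable {V : Type*} {G : SimpleGraph V} {w x : V → V → ℝ} {M : V → V → Prop} {g : ℝ}

/-- The symmetrized upper left block of a matrix indexed by two copies of the vertices. It sends
a doubly stochastic matrix to a fractional matching. -/
noncomputable def symmBlock : Matrix (V ⊕ V) (V ⊕ V) ℝ →ₗ[ℝ] V → V → ℝ where
  toFun P i j := (P (Sum.inl i) (Sum.inl j) + P (Sum.inl j) (Sum.inl i)) / 2
  map_add' P Q := by ext i j; simp only [Matrix.add_apply, Pi.add_apply]; ring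
  map_smul' c P := by
    ext i j; simp only [Matrix.smul_apply, Pi.smul_apply, smul_eq_mul, RingHom.id_apply]; ring

theorem symmBlock_apply (P : Matrix (V ⊕ V) (V ⊕ V) ℝ) (i j : V) :
    symmBlock P i j = (P (Sum.inl i) (Sum.inl j) + P (Sum.inl j) (Sum.inl i)) / 2 :=
  rfl

theorem halfIntegral_symmBlock_permMatrix [DecidableEq V] (σ : Equiv.Perm (V ⊕ V)) :
    HalfIntegral (symmBlock (σ.permMatrix ℝ)) := by
  intro i j
  simp only [symmBlock_apply, Equiv.Perm.permMatrix, PEquiv.toMatrix_apply]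
  split_ifs <;> norm_num

theorem HalfIntegral.abs_sub_mInd_le_one (hx : HalfIntegral x) (M : V → V → Prop) (i j : V) :
    |x i j - mInd M i j| ≤ 1 := by
  rw [mInd]
  rcases hx i j with h | h | h <;> rw [h] <;> split_ifs <;> norm_num [abs_le]

variable [Fintype V] [DecidableRel G.Adj]

/-- The matching `M` beats every other half-integral feasible point of the LP relaxation by at
least `g`. -/
def HasLPGap (G : SimpleGraph V) [DecidableRel G.Adj] (w : V → V → ℝ) (M : V → V → Prop)
    (g : ℝ) : Prop :=
  ∀ x, LPFeasible G x → HalfIntegral x → x ≠ mInd M → LPval G w x + g ≤ LPval G w (mInd M)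

theorem isLinearMap_LPval (G : SimpleGraph V) [DecidableRel G.Adj] (w : V → V → ℝ) :
    IsLinearMap ℝ (LPval G w) where
  map_add x y := by
    simp only [LPval, Pi.add_apply, mul_add, sum_add_distrib]
  map_smul c x := by
    simp only [LPval, Pi.smul_apply, smul_eq_mul, mul_left_comm _ c, ← mul_sum]

theorem sum_neighborFinset_eq_sum {f : V → ℝ} {i : V} (hf : ∀ j, ¬G.Adj i j → f j = 0) :
    ∑ j ∈ G.neighborFinset i, f j = ∑ j, f j :=
  sum_subset (subset_univ _) fun j _ hj ↦ hf j (mt (G.mem_neighborFinset i j).mpr hj)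

theorem lpFeasible_symmBlock [DecidableEq V] {P : Matrix (V ⊕ V) (V ⊕ V) ℝ}
    (hP : P ∈ doublyStochastic ℝ (V ⊕ V)) (hoff : ∀ i j, ¬G.Adj i j → symmBlock P i j = 0) :
    LPFeasible G (symmBlock P) := by
  have hnonneg := fun a b ↦ nonneg_of_mem_doublyStochastic hP (i := a) (j := b)
  refine ⟨fun i j ↦ ?_, fun i j ↦ ?_, hoff, fun i ↦ ?_⟩
  · rw [symmBlock_apply, symmBlock_apply, add_comm]
  · exact div_nonneg (add_nonneg (hnonneg _ _) (hnonneg _ _)) zero_le_two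
  have hrow : ∑ j, P (Sum.inl i) (Sum.inl j) ≤ 1 := by
    rw [← sum_row_of_mem_doublyStochastic hP (Sum.inl i), Fintype.sum_sum_type]
    exact le_add_of_nonneg_right (sum_nonneg fun j _ ↦ hnonneg _ _)
  have hcol : ∑ j, P (Sum.inl j) (Sum.inl i) ≤ 1 := by
    rw [← sum_col_of_mem_doublyStochastic hP (Sum.inl i), Fintype.sum_sum_type]
    exact le_add_of_nonneg_right (sum_nonneg fun j _ ↦ hnonneg _ _)
  rw [sum_neighborFinset_eq_sum (hoff i)]
  simp only [symmBlock_apply, ← sum_div, sum_add_distrib]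
  linarith

theorem LPFeasible.exists_doublyStochastic [DecidableEq V] (hx : LPFeasible G x) :
    ∃ P ∈ doublyStochastic ℝ (V ⊕ V), symmBlock P = x := by
  obtain ⟨hsymm, hnonneg, hoff, hrow⟩ := hx
  set D : Matrix V V ℝ := Matrix.diagonal fun i ↦ 1 - ∑ j, x i j with hD
  have hD_nonneg (i j : V) : 0 ≤ D i j := by
    rw [hD, Matrix.diagonal_apply]
    split_ifs
    · rw [← sum_neighborFinset_eq_sum (hoff i)]; exact sub_nonneg.mpr (hrow i)
    · exact le_rfl
  refine ⟨Matrix.fromBlocks (Matrix.of x) D D (Matrix.of x), ?_, ?_⟩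
  · refine mem_doublyStochastic_iff_sum.mpr ⟨?_, ?_, ?_⟩
    · rintro (i | i) (j | j)
      exacts [hnonneg i j, hD_nonneg i j, hD_nonneg i j, hnonneg i j]
    · rintro (i | i) <;> simp [D, Matrix.diagonal_apply]
    · rintro (j | j) <;> simp [D, Matrix.diagonal_apply, fun i ↦ hsymm i j]
  · ext i j
    simp [symmBlock_apply, hsymm j i]

/-- Apply the Birkhoff–von Neumann theorem to the bipartite double cover. -/
theorem LPFeasible.mem_convexHull (hx : LPFeasible G x) :
    x ∈ convexHull ℝ {y | LPFeasible G y ∧ HalfIntegral y} := by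
  classical
  obtain ⟨P, hP, rfl⟩ := hx.exists_doublyStochastic
  obtain ⟨c, hc, hc_sum, rfl⟩ := exists_eq_sum_perm_of_mem_doublyStochastic hP
  have hsum : symmBlock (∑ σ, c σ • σ.permMatrix ℝ) = ∑ σ, c σ • symmBlock (σ.permMatrix ℝ) := by
    simp only [map_sum, map_smul]
  have hnonneg (σ : Equiv.Perm (V ⊕ V)) (i j : V) : 0 ≤ symmBlock (σ.permMatrix ℝ) i j := by
    rcases halfIntegral_symmBlock_permMatrix σ i j with h | h | h <;> rw [h] <;> norm_num
  rw [hsum] at hx ⊢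
  rw [← finsum_eq_sum_of_fintype] at hc_sum ⊢
  refine (convex_convexHull ℝ _).finsum_mem hc hc_sum fun σ hσ ↦ subset_convexHull ℝ _
    ⟨lpFeasible_symmBlock permMatrix_mem_doublyStochastic fun i j hij ↦ ?_,
      halfIntegral_symmBlock_permMatrix σ⟩
  have hzero := hx.2.2.1 i j hij
  simp only [Finset.sum_apply, Pi.smul_apply, smul_eq_mul] at hzero
  exact (mul_eq_zero.mp ((sum_eq_zero_iff_of_nonneg fun τ _ ↦
    mul_nonneg (hc τ) (hnonneg τ i j)).mp hzero σ (mem_univ σ))).resolve_left hσ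

theorem HasLPGap.LPval_add_le (hgap : HasLPGap G w M g) (hg : 0 ≤ g) (hx : LPFeasible G x)
    (a b : V) : LPval G w x + g * |x a b - mInd M a b| ≤ LPval G w (mInd M) := by
  have hconvex : ConvexOn ℝ Set.univ
      fun y : V → V → ℝ ↦ LPval G w y + g * |y a b - mInd M a b| := by
    refine ((isLinearMap_LPval G w).mk'.convexOn convex_univ).add (ConvexOn.smul hg ?_)
    exact (convexOn_dist (mInd M a b) convex_univ).comp_linearMap
      (LinearMap.proj b ∘ₗ LinearMap.proj a : (V → V → ℝ) →ₗ[ℝ] ℝ)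
  refine (convexHull_min ?_ (hconvex.convex_le (LPval G w (mInd M))) hx.mem_convexHull).2
  rintro y ⟨hy, hy_half⟩
  refine ⟨Set.mem_univ y, ?_⟩
  obtain rfl | hne := eq_or_ne y (mInd M)
  · simp
  · linarith [hgap y hy hy_half hne,
      mul_le_of_le_one_right hg (hy_half.abs_sub_mInd_le_one M a b)]

end LinearProgram

/-! ### Exchange directions -/

/-- A direction in edge space that leaves a matching `M` towards the LP polytope: it removes weight
only from edges of `M` and adds weight only to edges of `G` outside `M`. -/
structure IsExchange {V : Type*} (G : SimpleGraph V) (M : V → V → Prop) (d : V → V → ℝ) :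
    Prop where
  symm : ∀ i j, d i j = d j i
  eq_zero_of_not_adj : ∀ i j, ¬G.Adj i j → d i j = 0
  nonneg_of_not_mem : ∀ i j, ¬M i j → 0 ≤ d i j
  nonpos_of_mem : ∀ i j, M i j → d i j ≤ 0

/-- The LP point of a single undirected edge. -/
def edgeInd {V : Type*} [DecidableEq V] (i j a b : V) : ℝ :=
  if s(a, b) = s(i, j) then 1 else 0

/-- Some exchange direction has LP value at least `s` and raises the load of every matched vertex
`a` by at most `c a`. -/
def Gains {V : Type*} [Fintype V] (G : SimpleGraph V) [DecidableRel G.Adj] (w : V → V → ℝ)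
    (M : V → V → Prop) (c : V → ℝ) (s : ℝ) : Prop :=
  ∃ d, IsExchange G M d ∧ (∀ a, (∃ u, M a u) → ∑ b, d a b ≤ c a) ∧ s ≤ LPval G w d

section Matching

variable {V : Type*} {G : SimpleGraph V} {M : V → V → Prop} {i u : V}

theorem IsMatching.mInd_symm (hM : IsMatching G M) (i j : V) : mInd M i j = mInd M j i := by
  classical exact if_congr ⟨hM.symm i j, hM.symm j i⟩ rfl rfl

theorem mInd_eq_zero (hi : ∀ j, ¬M i j) : mInd M i = 0 :=
  funext fun j ↦ if_neg (hi j)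

theorem IsMatching.mInd_eq_single [DecidableEq V] (hM : IsMatching G M) (hiu : M i u) :
    mInd M i = Pi.single u 1 := by
  ext j
  obtain rfl | hne := eq_or_ne j u
  · rw [Pi.single_eq_same, mInd, if_pos hiu]
  · rw [Pi.single_eq_of_ne hne, mInd, if_neg fun hij ↦ hne (hM.unique i j u hij hiu)]

theorem exists_pos_mul_sum_abs_le_one [Fintype V] (d : V → V → ℝ) :
    ∃ δ : ℝ, 0 < δ ∧ ∀ i, δ * ∑ j, |d i j| ≤ 1 := by
  have hrow (i : V) : 0 ≤ ∑ j, |d i j| := sum_nonneg fun j _ ↦ abs_nonneg _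
  have hpos : 0 < 1 + ∑ i, ∑ j, |d i j| := by linarith [sum_nonneg fun i (_ : i ∈ univ) ↦ hrow i]
  refine ⟨(1 + ∑ i, ∑ j, |d i j|)⁻¹, inv_pos.mpr hpos, fun i ↦ ?_⟩
  rw [inv_mul_le_one₀ hpos]
  linarith [single_le_sum (fun k _ ↦ hrow k) (mem_univ i)]

end Matching

namespace IsExchange

variable {V : Type*} {G : SimpleGraph V} {M : V → V → Prop} {d e : V → V → ℝ}

theorem zero (G : SimpleGraph V) (M : V → V → Prop) : IsExchange G M 0 :=
  ⟨fun _ _ ↦ rfl, fun _ _ _ ↦ rfl, fun _ _ _ ↦ le_rfl, fun _ _ _ ↦ le_rfl⟩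

theorem add (hd : IsExchange G M d) (he : IsExchange G M e) : IsExchange G M (d + e) where
  symm i j := congrArg₂ (· + ·) (hd.symm i j) (he.symm i j)
  eq_zero_of_not_adj i j h := by
    rw [Pi.add_apply, Pi.add_apply, hd.eq_zero_of_not_adj i j h, he.eq_zero_of_not_adj i j h,
      add_zero]
  nonneg_of_not_mem i j h := add_nonneg (hd.nonneg_of_not_mem i j h) (he.nonneg_of_not_mem i j h)
  nonpos_of_mem i j h := add_nonpos (hd.nonpos_of_mem i j h) (he.nonpos_of_mem i j h)

variable [Fintype V]

theorem lpFeasible_mInd_add_smul [DecidableRel G.Adj] (hM : IsMatching G M)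
    (hd : IsExchange G M d) (hrow : ∀ i, (∃ u, M i u) → ∑ j, d i j ≤ 0) {δ : ℝ} (hδ : 0 ≤ δ)
    (hδd : ∀ i, δ * ∑ j, |d i j| ≤ 1) : LPFeasible G (mInd M + δ • d) := by
  classical
  have hoff (i j : V) (hij : ¬G.Adj i j) : (mInd M + δ • d) i j = 0 := by
    rw [Pi.add_apply, Pi.add_apply, Pi.smul_apply, Pi.smul_apply, hd.eq_zero_of_not_adj i j hij,
      smul_zero, add_zero, mInd, if_neg fun h ↦ hij (hM.subset i j h)]
  refine ⟨fun i j ↦ ?_, fun i j ↦ ?_, hoff, fun i ↦ ?_⟩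
  · simp only [Pi.add_apply, Pi.smul_apply, hM.mInd_symm i j, hd.symm i j]
  · simp only [Pi.add_apply, Pi.smul_apply, smul_eq_mul, mInd]
    split_ifs with hij
    · have hentry : δ * |d i j| ≤ 1 := (mul_le_mul_of_nonneg_left
        (single_le_sum (fun k _ ↦ abs_nonneg (d i k)) (mem_univ j)) hδ).trans (hδd i)
      linarith [mul_le_mul_of_nonneg_left (neg_abs_le (d i j)) hδ]
    · linarith [mul_nonneg hδ (hd.nonneg_of_not_mem i j hij)]
  · rw [sum_neighborFinset_eq_sum (hoff i)]
    simp only [Pi.add_apply, Pi.smul_apply, smul_eq_mul, sum_add_distrib, ← mul_sum]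
    by_cases hi : ∃ u, M i u
    · obtain ⟨u, hiu⟩ := hi
      rw [hM.mInd_eq_single hiu, sum_pi_single', if_pos (mem_univ u)]
      linarith [mul_nonpos_of_nonneg_of_nonpos hδ (hrow i ⟨u, hiu⟩)]
    · rw [mInd_eq_zero (not_exists.mp hi)]
      simp only [Pi.zero_apply, sum_const_zero, zero_add]
      exact (mul_le_mul_of_nonneg_left (sum_le_sum fun j _ ↦ le_abs_self (d i j)) hδ).trans (hδd i)

theorem LPval_add_le_zero [DecidableRel G.Adj] {w : V → V → ℝ} {g : ℝ} (hM : IsMatching G M)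
    (hg : 0 ≤ g) (hgap : HasLPGap G w M g) (hd : IsExchange G M d)
    (hrow : ∀ i, (∃ u, M i u) → ∑ j, d i j ≤ 0) (a b : V) : LPval G w d + g * |d a b| ≤ 0 := by
  obtain ⟨δ, hδ, hδd⟩ := exists_pos_mul_sum_abs_le_one d
  have hsharp :=
    hgap.LPval_add_le hg (hd.lpFeasible_mInd_add_smul hM hrow hδ.le hδd) a b
  rw [(isLinearMap_LPval G w).map_add, (isLinearMap_LPval G w).map_smul] at hsharp
  simp only [Pi.add_apply, Pi.smul_apply, smul_eq_mul, add_sub_cancel_left, abs_mul,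
    abs_of_pos hδ] at hsharp
  refine nonpos_of_mul_nonpos_right (?_ : δ * _ ≤ 0) hδ
  linarith

end IsExchange

section EdgeIndicator

variable {V : Type*} [DecidableEq V] {G : SimpleGraph V} {M : V → V → Prop} {i j : V}

theorem edgeInd_nonneg (i j a b : V) : 0 ≤ edgeInd i j a b := by
  rw [edgeInd]; split_ifs <;> norm_num

theorem edgeInd_self (i j : V) : edgeInd i j i j = 1 :=
  if_pos rfl

theorem edgeInd_symm (i j a b : V) : edgeInd i j a b = edgeInd i j b a := by
  rw [edgeInd, edgeInd, Sym2.eq_swap]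

theorem edgeInd_eq_zero {R : V → V → Prop} (hR : ∀ a b, R a b → R b a) {a b : V}
    (hij : R i j) (hab : ¬R a b) : edgeInd i j a b = 0 := by
  refine if_neg fun h ↦ hab ?_
  obtain ⟨rfl, rfl⟩ | ⟨rfl, rfl⟩ := Sym2.eq_iff.mp h
  exacts [hij, hR _ _ hij]

theorem isExchange_edgeInd (hM : IsMatching G M) (hij : G.Adj i j) (hMij : ¬M i j) :
    IsExchange G M (edgeInd i j) where
  symm := edgeInd_symm i j
  eq_zero_of_not_adj _ _ := edgeInd_eq_zero (fun _ _ ↦ .symm) hij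
  nonneg_of_not_mem _ _ _ := edgeInd_nonneg i j _ _
  nonpos_of_mem _ _ hab := (edgeInd_eq_zero (R := fun a b ↦ ¬M a b)
    (fun a b h hba ↦ h (hM.symm b a hba)) hMij (not_not.mpr hab)).le

theorem isExchange_neg_edgeInd (hM : IsMatching G M) (hij : M i j) :
    IsExchange G M (-edgeInd i j) where
  symm a b := congrArg Neg.neg (edgeInd_symm i j a b)
  eq_zero_of_not_adj _ _ hab :=
    neg_eq_zero.mpr (edgeInd_eq_zero (fun _ _ ↦ .symm) (hM.subset i j hij) hab)
  nonneg_of_not_mem _ _ hab := (neg_eq_zero.mpr (edgeInd_eq_zero hM.symm hij hab)).ge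
  nonpos_of_mem _ _ _ := neg_nonpos.mpr (edgeInd_nonneg i j _ _)

variable [Fintype V]

theorem sum_edgeInd (hij : i ≠ j) (a : V) :
    ∑ b, edgeInd i j a b = (Pi.single i 1 + Pi.single j 1 : V → ℝ) a := by
  simp only [edgeInd, Sym2.eq_iff, Pi.add_apply, Pi.single_apply]
  by_cases hi : a = i
  · subst hi; simp [hij]
  · by_cases hj : a = j
    · subst hj; simp [hi]
    · simp [hi, hj]

theorem LPval_edgeInd [DecidableRel G.Adj] {w : V → V → ℝ} (hw : ∀ i j, w i j = w j i)
    (hij : G.Adj i j) : LPval G w (edgeInd i j) = w i j := by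
  have hentry (a b : V) : w a b * edgeInd i j a b = w i j * edgeInd i j a b := by
    rw [edgeInd]
    split_ifs with h
    · obtain ⟨rfl, rfl⟩ | ⟨rfl, rfl⟩ := Sym2.eq_iff.mp h
      exacts [rfl, by rw [hw]]
    · rw [mul_zero, mul_zero]
  have hrow (a : V) : ∑ b ∈ G.neighborFinset a, edgeInd i j a b =
      (Pi.single i 1 + Pi.single j 1 : V → ℝ) a := by
    rw [sum_neighborFinset_eq_sum fun b ↦ edgeInd_eq_zero (fun _ _ ↦ .symm) hij, sum_edgeInd hij.ne]
  simp only [LPval, hentry, ← mul_sum, hrow, Pi.add_apply, sum_add_distrib, sum_pi_single',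
    mem_univ, if_true]
  ring

end EdgeIndicator

namespace Gains

variable {V : Type*} [Fintype V] {G : SimpleGraph V} [DecidableRel G.Adj] {w : V → V → ℝ}
  {M : V → V → Prop} {c c' : V → ℝ} {g s s' : ℝ} {i j : V}

theorem zero : Gains G w M 0 0 :=
  ⟨0, .zero G M, fun _ _ ↦ (sum_const_zero (s := univ)).le, (isLinearMap_LPval G w).map_zero.ge⟩

theorem add (h : Gains G w M c s) (h' : Gains G w M c' s') : Gains G w M (c + c') (s + s') := by
  obtain ⟨d, hd, hdc, hds⟩ := h
  obtain ⟨d', hd', hdc', hds'⟩ := h'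
  refine ⟨d + d', hd.add hd', fun a ha ↦ ?_, ?_⟩
  · simp only [Pi.add_apply, sum_add_distrib]
    exact add_le_add (hdc a ha) (hdc' a ha)
  · rw [(isLinearMap_LPval G w).map_add]
    exact add_le_add hds hds'

theorem mono (h : Gains G w M c s) (hc : ∀ a, (∃ u, M a u) → c a ≤ c' a) (hs : s' ≤ s) :
    Gains G w M c' s' := by
  obtain ⟨d, hd, hdc, hds⟩ := h
  exact ⟨d, hd, fun a ha ↦ (hdc a ha).trans (hc a ha), hs.trans hds⟩

variable [DecidableEq V]

theorem add_edge (hM : IsMatching G M) (hw : ∀ i j, w i j = w j i) (h : Gains G w M c s)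
    (hij : G.Adj i j) (hMij : ¬M i j) :
    Gains G w M (c + (Pi.single i 1 + Pi.single j 1)) (s + w i j) :=
  h.add ⟨edgeInd i j, isExchange_edgeInd hM hij hMij, fun a _ ↦ (sum_edgeInd hij.ne a).le,
    (LPval_edgeInd hw hij).ge⟩

theorem remove_edge (hM : IsMatching G M) (hw : ∀ i j, w i j = w j i) (h : Gains G w M c s)
    (hij : M i j) : Gains G w M (c - (Pi.single i 1 + Pi.single j 1)) (s - w i j) := by
  have hadj := hM.subset i j hij
  rw [sub_eq_add_neg, sub_eq_add_neg s]
  refine h.add ⟨-edgeInd i j, isExchange_neg_edgeInd hM hij, fun a _ ↦ ?_, ?_⟩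
  · simp only [Pi.neg_apply, sum_neg_distrib, sum_edgeInd hadj.ne a, le_refl]
  · rw [(isLinearMap_LPval G w).map_neg, LPval_edgeInd hw hadj]

theorem add_weight_add_gap_le (hM : IsMatching G M) (hw : ∀ i j, w i j = w j i) (hg : 0 ≤ g)
    (hgap : HasLPGap G w M g) (h : Gains G w M c s) (hij : G.Adj i j) (hMij : ¬M i j)
    (hc : ∀ a, (∃ u, M a u) → (c + (Pi.single i 1 + Pi.single j 1) : V → ℝ) a ≤ 0) :
    s + w i j + g ≤ 0 := by
  obtain ⟨d, hd, hdc, hds⟩ := h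
  have hgain := (hd.add (isExchange_edgeInd hM hij hMij)).LPval_add_le_zero hM hg hgap
    (fun a ha ↦ by
      simp only [Pi.add_apply, sum_add_distrib, sum_edgeInd hij.ne a]
      exact (add_le_add_left (hdc a ha) _).trans (hc a ha)) i j
  have hentry : 1 ≤ |(d + edgeInd i j) i j| := by
    rw [Pi.add_apply, Pi.add_apply, edgeInd_self]
    exact le_abs.mpr (.inl (by linarith [hd.nonneg_of_not_mem i j hMij]))
  rw [(isLinearMap_LPval G w).map_add, LPval_edgeInd hw hij] at hgain
  linarith [le_mul_of_one_le_right hg hentry]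

theorem sub_weight_add_gap_le (hM : IsMatching G M) (hw : ∀ i j, w i j = w j i) (hg : 0 ≤ g)
    (hgap : HasLPGap G w M g) (h : Gains G w M c s) (hij : M i j)
    (hc : ∀ a, (∃ u, M a u) → c a ≤ (Pi.single i 1 + Pi.single j 1 : V → ℝ) a) :
    s - w i j + g ≤ 0 := by
  obtain ⟨d, hd, hdc, hds⟩ := h
  have hadj := hM.subset i j hij
  have hgain := (hd.add (isExchange_neg_edgeInd hM hij)).LPval_add_le_zero hM hg hgap
    (fun a ha ↦ by
      simp only [Pi.add_apply, Pi.neg_apply, sum_add_distrib, sum_neg_distrib,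
        sum_edgeInd hadj.ne a]
      exact add_neg_nonpos_iff.mpr ((hdc a ha).trans (hc a ha))) i j
  have hentry : 1 ≤ |(d + -edgeInd i j) i j| := by
    rw [Pi.add_apply, Pi.add_apply, Pi.neg_apply, Pi.neg_apply, edgeInd_self]
    exact le_abs.mpr (.inr (by linarith [hd.nonpos_of_mem i j hij]))
  rw [(isLinearMap_LPval G w).map_add, (isLinearMap_LPval G w).map_neg,
    LPval_edgeInd hw hadj] at hgain
  linarith [le_mul_of_one_le_right hg hentry]

end Gains

/-! ### Approximate fixed points -/

section Earnings

variable {V : Type*} {G : SimpleGraph V} {w α : V → V → ℝ} {i j k : V}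

theorem offer_cases (hw : ∀ i j, w i j = w j i) (hα : ValidMsg G α) (hij : G.Adj i j) :
    (α i j + α j i ≤ w i j ∧ offer w α i j = (w i j - α i j + α j i) / 2 ∧
      offer w α j i = (w i j - α j i + α i j) / 2) ∨
    (w i j ≤ α i j + α j i ∧ offer w α i j = pos (w i j - α i j) ∧
      offer w α j i = pos (w i j - α j i)) := by
  have hαij := hα i j hij
  have hαji := hα j i hij.symm
  rw [offer, offer, hw j i]
  rcases le_total (α i j + α j i) (w i j) with h | h
  · refine .inl ⟨h, ?_, ?_⟩ <;> rw [pos_of_nonneg (by linarith), pos_of_nonneg (by linarith)] <;>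
      ring
  · refine .inr ⟨h, ?_, ?_⟩ <;> rw [pos_of_nonpos (x := _ - _ - _) (by linarith)] <;> ring

variable [Fintype V] [DecidableRel G.Adj]

theorem earn_nonneg (hα : ValidMsg G α) (i : V) : 0 ≤ earn G w α i :=
  fmax_nonneg fun k hk ↦ offer_nonneg (hα i k ((G.mem_neighborFinset i k).mp hk))

theorem offer_le_earn (hij : G.Adj i j) : offer w α j i ≤ earn G w α i :=
  le_fmax (fun k ↦ offer w α k i) ((G.mem_neighborFinset i j).mpr hij)

variable [DecidableEq V]

theorem offer_le_upd (hik : G.Adj i k) (hkj : k ≠ j) : offer w α k i ≤ upd G w α i j :=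
  le_fmax (fun k ↦ offer w α k i) (mem_erase.mpr ⟨hkj, (G.mem_neighborFinset i k).mpr hik⟩)

theorem upd_le_earn (hα : ValidMsg G α) (i j : V) : upd G w α i j ≤ earn G w α i :=
  fmax_le (earn_nonneg hα i) fun k hk ↦
    offer_le_earn ((G.mem_neighborFinset i k).mp (mem_of_mem_erase hk))

theorem earn_le_max_upd_offer (hα : ValidMsg G α) (i j : V) :
    earn G w α i ≤ max (upd G w α i j) (offer w α j i) := by
  refine fmax_le (le_max_of_le_left (upd_nonneg hα i j)) fun k hk ↦ ?_
  obtain rfl | hkj := eq_or_ne k j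
  · exact le_max_right _ _
  · exact le_max_of_le_left (offer_le_upd ((G.mem_neighborFinset i k).mp hk) hkj)

end Earnings

namespace IsEpsFixedPt

variable {V : Type*} [Fintype V] [DecidableEq V] {G : SimpleGraph V} [DecidableRel G.Adj]
  {w α : V → V → ℝ} {ε : ℝ} {i j : V}

theorem nonneg (hfix : IsEpsFixedPt G w α ε) (hij : G.Adj i j) : 0 ≤ ε :=
  (abs_nonneg _).trans (hfix i j hij)

theorem le_upd_add (hfix : IsEpsFixedPt G w α ε) (hij : G.Adj i j) : α i j ≤ upd G w α i j + ε := by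
  linarith [le_of_abs_le (hfix i j hij)]

theorem upd_le_add (hfix : IsEpsFixedPt G w α ε) (hij : G.Adj i j) : upd G w α i j ≤ α i j + ε := by
  linarith [neg_le_of_abs_le (hfix i j hij)]

theorem le_earn_add_earn (hw : ∀ i j, w i j = w j i) (hα : ValidMsg G α)
    (hfix : IsEpsFixedPt G w α ε) (hij : G.Adj i j) :
    w i j - 2 * ε ≤ earn G w α i + earn G w α j := by
  rcases offer_cases hw hα hij with ⟨-, hoij, hoji⟩ | ⟨hle, -, -⟩
  · linarith [offer_le_earn (w := w) (α := α) hij, offer_le_earn (w := w) (α := α) hij.symm,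
      hfix.nonneg hij]
  · linarith [hfix.le_upd_add hij, hfix.le_upd_add hij.symm, upd_le_earn (w := w) hα i j,
      upd_le_earn (w := w) hα j i]

theorem earn_add_offer_le (hw : ∀ i j, w i j = w j i) (hα : ValidMsg G α)
    (hfix : IsEpsFixedPt G w α ε) (hij : G.Adj i j) (hpos : 0 < offer w α j i) :
    earn G w α j + offer w α j i ≤ w i j + ε := by
  rw [← le_sub_iff_add_le]
  refine (earn_le_max_upd_offer hα j i).trans (max_le ?_ ?_)
  · have hupd := hfix.upd_le_add hij.symm
    rcases offer_cases hw hα hij with ⟨hle, -, hoji⟩ | ⟨-, -, hoji⟩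
    · linarith
    · rw [hoji, pos, lt_max_iff, or_iff_left (lt_irrefl 0)] at hpos
      rw [hoji, pos_of_nonneg hpos.le]
      linarith
  · have hε := hfix.nonneg hij
    rcases offer_cases hw hα hij with ⟨-, hoij, hoji⟩ | ⟨hle, hoij, hoji⟩
    · linarith
    · rw [hoji, pos, lt_max_iff, or_iff_left (lt_irrefl 0)] at hpos
      rw [hoij, hoji, pos_of_nonneg hpos.le]
      exact max_le (by linarith) (by linarith [hα j i hij.symm])

theorem earn_sub_offer_le (hw : ∀ i j, w i j = w j i) (hα : ValidMsg G α)
    (hfix : IsEpsFixedPt G w α ε) (hij : G.Adj i j) (hpos : 0 < offer w α j i) :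
    earn G w α j - offer w α i j ≤ earn G w α i - offer w α j i + 2 * ε := by
  have hearn := hfix.earn_add_offer_le hw hα hij hpos
  have hbest := offer_le_earn (w := w) (α := α) hij
  rcases offer_cases hw hα hij with ⟨-, hoij, hoji⟩ | ⟨-, hoij, -⟩
  · linarith [hfix.nonneg hij]
  · have hoff : w i j - α i j ≤ offer w α i j := hoij ▸ le_pos _
    linarith [hfix.le_upd_add hij, upd_le_earn (w := w) hα i j]

theorem earn_sub_upd_le (hw : ∀ i j, w i j = w j i) (hα : ValidMsg G α)
    (hfix : IsEpsFixedPt G w α ε) (hij : G.Adj i j) :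
    earn G w α j - upd G w α j i ≤ earn G w α i - upd G w α i j + 2 * ε := by
  rw [sub_le_iff_le_add']
  have hε := hfix.nonneg hij
  have hupd := upd_le_earn (w := w) hα i j
  have hbest := offer_le_earn (w := w) (α := α) hij
  have hαij := abs_le.mp (hfix i j hij)
  have hαji := hfix.le_upd_add hij.symm
  refine (earn_le_max_upd_offer hα j i).trans (max_le (by linarith) ?_)
  rcases offer_cases hw hα hij with ⟨-, hoij, hoji⟩ | ⟨hle, hoij, -⟩
  · linarith
  · rw [hoij]
    exact max_le (by linarith) (by linarith [upd_nonneg (w := w) hα j i])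

end IsEpsFixedPt

/-! ### Alternating walks -/

theorem exists_eq_of_card_le {V : Type*} [Fintype V] (x : ℕ → V) :
    ∃ s L, 0 < L ∧ s + L ≤ Fintype.card V ∧ x (s + L) = x s := by
  obtain ⟨a, b, hne, hab⟩ := Fintype.exists_ne_map_eq_of_card_lt
    (fun t : Fin (Fintype.card V + 1) ↦ x t) (by simp)
  wlog hlt : a < b generalizing a b
  · exact this b a hne.symm hab.symm (lt_of_le_of_ne (not_lt.mp hlt) hne.symm)
  have hlt' : (a : ℕ) < b := hlt
  exact ⟨a, b - a, by omega, by omega, by rw [Nat.add_sub_cancel' hlt'.le]; exact hab.symm⟩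

theorem exists_seq_rel_succ {V : Type*} (R : V → V → Prop) (v : V) :
    ∃ x : ℕ → V, x 0 = v ∧ ∀ t, (∃ u, R (x t) u) → R (x t) (x (t + 1)) := by
  classical
  refine ⟨fun t ↦ (fun v ↦ if h : ∃ u, R v u then h.choose else v)^[t] v, rfl, fun t ht ↦ ?_⟩
  beta_reduce
  rw [Function.iterate_succ_apply', dif_pos ht]
  exact ht.choose_spec

theorem exists_walk_dead_end_or_cycle {V : Type*} [Fintype V] (R : V → V → Prop) (v : V) :
    ∃ x : ℕ → V, x 0 = v ∧
      ((∃ T < Fintype.card V, (∀ t < T, R (x t) (x (t + 1))) ∧ ∀ u, ¬R (x T) u) ∨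
        ∃ s L, 0 < L ∧ s + L ≤ Fintype.card V ∧ (∀ t < s + L, R (x t) (x (t + 1))) ∧
          x (s + L) = x s) := by
  classical
  obtain ⟨x, hx0, hx⟩ := exists_seq_rel_succ R v
  refine ⟨x, hx0, ?_⟩
  by_cases hend : ∃ T, T < Fintype.card V ∧ ∀ u, ¬R (x T) u
  · obtain ⟨hlt, hdead⟩ := Nat.find_spec hend
    refine .inl ⟨Nat.find hend, hlt, fun t ht ↦ hx t ?_, hdead⟩
    by_contra! hdead'
    exact Nat.find_min hend ht ⟨ht.trans hlt, hdead'⟩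
  · push Not at hend
    obtain ⟨s, L, hL, hsL, hcycle⟩ := exists_eq_of_card_le x
    exact .inr ⟨s, L, hL, hsL, fun t ht ↦ hx t (hend t (ht.trans_le hsL)), hcycle⟩

/-- The vertex `v` is matched, and its best offer from outside its partner falls short of its
earnings by at most `δ`. -/
def NearlyTied {V : Type*} [Fintype V] [DecidableEq V] (G : SimpleGraph V) [DecidableRel G.Adj]
    (w α : V → V → ℝ) (M : V → V → Prop) (δ : ℝ) (v : V) : Prop :=
  ∃ p, M v p ∧ earn G w α v ≤ upd G w α v p + δ

/-- The alternating walk step from a matched vertex `v` to the partner `u` of some `k` that makes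
`v` its best offer, necessarily positive, from outside its partner. -/
def AltStep {V : Type*} [Fintype V] [DecidableEq V] (G : SimpleGraph V) [DecidableRel G.Adj]
    (w α : V → V → ℝ) (M : V → V → Prop) (v u : V) : Prop :=
  ∃ p k, M v p ∧ G.Adj v k ∧ ¬M v k ∧ offer w α k v = upd G w α v p ∧ 0 < upd G w α v p ∧ M k u

/-- The accumulated loss along `L` alternating steps from a vertex that is nearly tied within
`δ`. -/
def walkCost (L : ℕ) (δ ε : ℝ) : ℝ :=
  L * δ + (2 * L ^ 2 + L) * ε

theorem walkCost_succ (L : ℕ) (δ ε : ℝ) :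
    walkCost (L + 1) δ ε = walkCost L δ ε + (δ + (4 * L + 3) * ε) := by
  simp only [walkCost]; push_cast; ring

theorem walkCost_succ' (L : ℕ) (δ ε : ℝ) :
    walkCost (L + 1) δ ε = (δ + 3 * ε) + walkCost L (δ + 4 * ε) ε := by
  simp only [walkCost]; push_cast; ring

theorem walkCost_add_le {s L : ℕ} {δ ε : ℝ} (hδ : 0 ≤ δ) (hε : 0 ≤ ε) :
    walkCost L (δ + 4 * s * ε) ε ≤ walkCost (s + L) δ ε := by
  have hdiff : 0 ≤ s * δ + (2 * s ^ 2 + s) * ε := by positivity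
  simp only [walkCost]
  push_cast
  linarith

theorem walkCost_mono {m n : ℕ} {δ ε : ℝ} (hδ : 0 ≤ δ) (hε : 0 ≤ ε) (hmn : m ≤ n) :
    walkCost m δ ε ≤ walkCost n δ ε := by
  simp only [walkCost]; gcongr

theorem NearlyTied.nonneg {V : Type*} [Fintype V] [DecidableEq V] {G : SimpleGraph V}
    [DecidableRel G.Adj] {w α : V → V → ℝ} {M : V → V → Prop} {δ : ℝ} {v : V} (hα : ValidMsg G α)
    (hv : NearlyTied G w α M δ v) : 0 ≤ δ := by
  obtain ⟨p, -, hp⟩ := hv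
  linarith [upd_le_earn (w := w) hα v p]

namespace IsEpsFixedPt

variable {V : Type*} [Fintype V] [DecidableEq V] {G : SimpleGraph V} [DecidableRel G.Adj]
  {w α : V → V → ℝ} {M : V → V → Prop} {ε δ g : ℝ} {u v k p : V} {L : ℕ} {x : ℕ → V}

theorem nearlyTied_of_offer (hw : ∀ i j, w i j = w j i) (hα : ValidMsg G α)
    (hfix : IsEpsFixedPt G w α ε) (hM : IsMatching G M) (hkv : G.Adj k v) (hMkv : ¬M k v)
    (hku : M k u) (hk : earn G w α k ≤ offer w α v k + δ) :
    NearlyTied G w α M (δ + 2 * ε) u := by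
  refine ⟨k, hM.symm k u hku, ?_⟩
  have hvu : v ≠ u := fun h ↦ hMkv (h ▸ hku)
  linarith [hfix.earn_sub_upd_le hw hα (hM.subset k u hku),
    offer_le_upd (w := w) (α := α) hkv hvu]

theorem earn_add_earn_le_of_offer_eq_upd (hw : ∀ i j, w i j = w j i) (hα : ValidMsg G α)
    (hfix : IsEpsFixedPt G w α ε) (hvk : G.Adj v k) (hk : offer w α k v = upd G w α v p)
    (hpos : 0 < upd G w α v p) (hp : earn G w α v ≤ upd G w α v p + δ) :
    earn G w α v + earn G w α k ≤ w v k + (δ + ε) := by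
  linarith [hfix.earn_add_offer_le hw hα hvk (hk ▸ hpos)]

theorem nearlyTied_of_altStep (hw : ∀ i j, w i j = w j i) (hα : ValidMsg G α)
    (hfix : IsEpsFixedPt G w α ε) (hM : IsMatching G M) (hv : NearlyTied G w α M δ v)
    (hvu : AltStep G w α M v u) : NearlyTied G w α M (δ + 4 * ε) u := by
  obtain ⟨p, hvp, hp⟩ := hv
  obtain ⟨q, k, hvq, hvk, hMvk, hk, hpos, hku⟩ := hvu
  obtain rfl := hM.unique v p q hvp hvq
  have htied := hfix.nearlyTied_of_offer (δ := δ + 2 * ε) hw hα hM hvk.symm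
    (fun h ↦ hMvk (hM.symm k v h)) hku
    (by linarith [hfix.earn_sub_offer_le hw hα hvk (hk ▸ hpos)])
  rwa [show δ + 2 * ε + 2 * ε = δ + 4 * ε by ring] at htied

theorem exists_weight_of_altStep (hw : ∀ i j, w i j = w j i) (hα : ValidMsg G α)
    (hfix : IsEpsFixedPt G w α ε) (hM : IsMatching G M) (hv : NearlyTied G w α M δ v)
    (hvu : AltStep G w α M v u) :
    ∃ k, G.Adj v k ∧ ¬M v k ∧ M k u ∧
      earn G w α v - earn G w α u - (δ + 3 * ε) ≤ w v k - w k u := by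
  obtain ⟨p, hvp, hp⟩ := hv
  obtain ⟨q, k, hvq, hvk, hMvk, hk, hpos, hku⟩ := hvu
  obtain rfl := hM.unique v p q hvp hvq
  refine ⟨k, hvk, hMvk, hku, ?_⟩
  linarith [hfix.earn_add_earn_le_of_offer_eq_upd hw hα hvk hk hpos hp,
    hfix.le_earn_add_earn hw hα (hM.subset k u hku)]

theorem gains_of_altStep (hw : ∀ i j, w i j = w j i) (hα : ValidMsg G α)
    (hfix : IsEpsFixedPt G w α ε) (hM : IsMatching G M) (hv : NearlyTied G w α M δ v)
    (hvu : AltStep G w α M v u) :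
    Gains G w M (Pi.single v 1 - Pi.single u 1)
      (earn G w α v - earn G w α u - (δ + 3 * ε)) := by
  obtain ⟨k, hvk, hMvk, hku, hweight⟩ := hfix.exists_weight_of_altStep hw hα hM hv hvu
  have hgains := (Gains.zero.add_edge hM hw hvk hMvk).remove_edge hM hw hku
  refine hgains.mono (fun a _ ↦ le_of_eq ?_) (by linarith)
  simp only [Pi.add_apply, Pi.sub_apply, Pi.zero_apply]
  ring

theorem nearlyTied_and_gains_of_walk (hw : ∀ i j, w i j = w j i) (hα : ValidMsg G α)
    (hfix : IsEpsFixedPt G w α ε) (hM : IsMatching G M) (hx : NearlyTied G w α M δ (x 0))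
    (hstep : ∀ t < L, AltStep G w α M (x t) (x (t + 1))) :
    NearlyTied G w α M (δ + 4 * L * ε) (x L) ∧
      Gains G w M (Pi.single (x 0) 1 - Pi.single (x L) 1)
        (earn G w α (x 0) - earn G w α (x L) - walkCost L δ ε) := by
  induction L with
  | zero => exact ⟨by simpa using hx, by simpa [walkCost] using Gains.zero⟩
  | succ L ih =>
    obtain ⟨htied, hgains⟩ := ih fun t ht ↦ hstep t (ht.trans L.lt_succ_self)
    have hlast := hstep L L.lt_succ_self
    constructor
    · convert hfix.nearlyTied_of_altStep hw hα hM htied hlast using 1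
      push_cast; ring
    · convert hgains.add (hfix.gains_of_altStep hw hα hM htied hlast) using 1
      · rw [sub_add_sub_cancel]
      · rw [walkCost_succ]; ring

theorem gap_le_of_closed_walk (hw : ∀ i j, w i j = w j i) (hα : ValidMsg G α)
    (hfix : IsEpsFixedPt G w α ε) (hM : IsMatching G M) (hg : 0 ≤ g) (hgap : HasLPGap G w M g)
    (hx : NearlyTied G w α M δ (x 0)) (hL : 0 < L)
    (hstep : ∀ t < L, AltStep G w α M (x t) (x (t + 1))) (hclosed : x L = x 0) :
    g ≤ walkCost L δ ε := by
  -- The edge added in the first step never cancels, so the closed walk gives a nonzero direction.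
  obtain ⟨L, rfl⟩ := Nat.exists_eq_succ_of_ne_zero hL.ne'
  obtain ⟨k, hk, hMk, hkx, hweight⟩ :=
    hfix.exists_weight_of_altStep hw hα hM hx (hstep 0 hL)
  have htied := hfix.nearlyTied_of_altStep hw hα hM hx (hstep 0 hL)
  obtain ⟨-, hgains⟩ := hfix.nearlyTied_and_gains_of_walk (x := fun t ↦ x (t + 1)) (L := L)
    hw hα hM htied fun t ht ↦ hstep (t + 1) (Nat.succ_lt_succ ht)
  have hbound := (hgains.remove_edge hM hw hkx).add_weight_add_gap_le hM hw hg hgap hk hMk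
    fun a _ ↦ by
      simp only [Pi.add_apply, Pi.sub_apply, hclosed, zero_add]
      linarith
  rw [hclosed] at hbound
  rw [Nat.succ_eq_add_one, walkCost_succ']
  simp only [zero_add] at hbound hweight
  linarith

theorem gains_of_not_altStep (hw : ∀ i j, w i j = w j i) (hα : ValidMsg G α)
    (hfix : IsEpsFixedPt G w α ε) (hM : IsMatching G M) (hv : NearlyTied G w α M δ v)
    (hend : ∀ u, ¬AltStep G w α M v u) :
    Gains G w M (Pi.single v 1) (earn G w α v - (δ + ε)) := by
  obtain ⟨p, hvp, hp⟩ := hv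
  rcases (upd_nonneg hα v p : 0 ≤ upd G w α v p).eq_or_lt with hzero | hpos
  · exact Gains.zero.mono (fun a _ ↦ Pi.single_nonneg.mpr zero_le_one a)
      (by linarith [hfix.nonneg (hM.subset v p hvp)])
  obtain ⟨k, hk, hoffer⟩ := exists_eq_fmax_of_pos hpos
  obtain ⟨hkp, hvk⟩ := mem_erase.mp hk
  rw [SimpleGraph.mem_neighborFinset] at hvk
  have hMvk : ¬M v k := fun h ↦ hkp (hM.unique v k p h hvp)
  have hunmatched (a : V) (ha : ∃ u, M a u) : a ≠ k := by
    rintro rfl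
    obtain ⟨u, hu⟩ := ha
    exact hend u ⟨p, a, hvp, hvk, hMvk, hoffer, hpos, hu⟩
  refine (Gains.zero.add_edge hM hw hvk hMvk).mono (fun a ha ↦ ?_) ?_
  · simp [Pi.single_eq_of_ne (hunmatched a ha)]
  · linarith [hfix.earn_add_earn_le_of_offer_eq_upd hw hα hvk hoffer hpos hp,
      earn_nonneg (w := w) hα k]

theorem gains_single (hw : ∀ i j, w i j = w j i) (hα : ValidMsg G α)
    (hfix : IsEpsFixedPt G w α ε) (hM : IsMatching G M) (hg : 0 ≤ g) (hgap : HasLPGap G w M g)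
    (hv : NearlyTied G w α M δ v) (hcost : walkCost (Fintype.card V) δ ε < g) :
    Gains G w M (Pi.single v 1) (earn G w α v - walkCost (Fintype.card V) δ ε) := by
  have hδ : 0 ≤ δ := hv.nonneg hα
  have hε : 0 ≤ ε := by
    obtain ⟨p, hvp, -⟩ := hv
    exact hfix.nonneg (hM.subset v p hvp)
  obtain ⟨x, rfl, ⟨T, hT, hstep, hend⟩ | ⟨s, L, hL, hsL, hstep, hcycle⟩⟩ :=
    exists_walk_dead_end_or_cycle (AltStep G w α M) v
  · obtain ⟨htied, hgains⟩ := hfix.nearlyTied_and_gains_of_walk hw hα hM hv hstep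
    refine (hgains.add (hfix.gains_of_not_altStep hw hα hM htied hend)).mono
      (fun a _ ↦ by rw [sub_add_cancel]) ?_
    linarith [walkCost_succ T δ ε, walkCost_mono hδ hε (Nat.succ_le_of_lt hT)]
  · obtain ⟨htied, -⟩ := hfix.nearlyTied_and_gains_of_walk hw hα hM hv fun t ht ↦
      hstep t (ht.trans_le (s.le_add_right L))
    have hcost' : g ≤ walkCost L (δ + 4 * s * ε) ε :=
      hfix.gap_le_of_closed_walk (x := fun t ↦ x (s + t)) hw hα hM hg hgap htied hL
        (fun t ht ↦ hstep (s + t) (Nat.add_lt_add_left ht s)) hcycle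
    exact absurd hcost
      ((hcost'.trans (walkCost_add_le hδ hε)).trans (walkCost_mono hδ hε hsL)).not_gt

theorem gains_neg_single (hw : ∀ i j, w i j = w j i) (hα : ValidMsg G α)
    (hfix : IsEpsFixedPt G w α ε) (hM : IsMatching G M) (hg : 0 ≤ g) (hgap : HasLPGap G w M g)
    (hkv : G.Adj k v) (hMkv : ¬M k v) (hk : earn G w α k ≤ offer w α v k + δ)
    (hcost : walkCost (Fintype.card V) (δ + 2 * ε) ε < g) :
    Gains G w M (-Pi.single k 1)
      (-earn G w α k - walkCost (Fintype.card V) (δ + 2 * ε) ε - 2 * ε) := by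
  by_cases hmatched : ∃ u, M k u
  · obtain ⟨u, hku⟩ := hmatched
    have htied := hfix.nearlyTied_of_offer hw hα hM hkv hMkv hku hk
    refine ((hfix.gains_single hw hα hM hg hgap htied hcost).remove_edge hM hw hku).mono
      (fun a _ ↦ ?_) ?_
    · simp only [Pi.sub_apply, Pi.add_apply, Pi.neg_apply]
      linarith
    · linarith [hfix.le_earn_add_earn hw hα (hM.subset k u hku)]
  · refine Gains.zero.mono (fun a ha ↦ ?_) ?_
    · have hak : a ≠ k := fun h ↦ hmatched (h ▸ ha)
      simp [Pi.single_eq_of_ne hak]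
    · have hε := hfix.nonneg hkv
      have hδ : 0 ≤ δ := by linarith [offer_le_earn (w := w) (α := α) hkv]
      have hwalk : 0 ≤ walkCost (Fintype.card V) (δ + 2 * ε) ε := by
        rw [walkCost]; positivity
      linarith [earn_nonneg (w := w) hα k]

end IsEpsFixedPt

/-! ### Approximate fixed points near a large LP gap -/

namespace IsEpsFixedPt

variable {V : Type*} [Fintype V] [DecidableEq V] {G : SimpleGraph V} [DecidableRel G.Adj]
  {w α : V → V → ℝ} {M : V → V → Prop} {ε g : ℝ} {i j : V}

theorem nearlyTied_of_weight_le (hw : ∀ i j, w i j = w j i) (hα : ValidMsg G α)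
    (hfix : IsEpsFixedPt G w α ε) (hM : IsMatching G M) (hij : M i j)
    (hle : w i j ≤ α i j + α j i + 2 * ε) : NearlyTied G w α M (2 * ε) i := by
  have hadj := hM.subset i j hij
  have hε := hfix.nonneg hadj
  have hαij := hfix.le_upd_add hadj
  refine ⟨j, hij, (earn_le_max_upd_offer hα i j).trans (max_le (by linarith) ?_)⟩
  rcases offer_cases hw hα hadj with ⟨-, -, hoji⟩ | ⟨hle', -, hoji⟩
  · linarith
  · rw [hoji]
    exact max_le (by linarith) (by linarith [upd_nonneg (w := w) hα i j])

theorem add_lt_weight_of_matched (hw : ∀ i j, w i j = w j i) (hα : ValidMsg G α)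
    (hfix : IsEpsFixedPt G w α ε) (hM : IsMatching G M) (hgap : HasLPGap G w M g)
    (hg : 4 * (Fintype.card V + 1) ^ 2 * ε < g) (hij : M i j) :
    α i j + α j i + 2 * ε < w i j := by
  by_contra! hle
  have hadj := hM.subset i j hij
  have hε := hfix.nonneg hadj
  have hcost : 2 * walkCost (Fintype.card V) (2 * ε) ε + 2 * ε < g := by
    refine lt_of_le_of_lt ?_ hg
    rw [walkCost, ← sub_nonneg]; ring_nf; positivity
  have hcost_nonneg : 0 ≤ walkCost (Fintype.card V) (2 * ε) ε := by rw [walkCost]; positivity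
  have hgains_i := hfix.gains_single hw hα hM (by linarith) hgap
    (hfix.nearlyTied_of_weight_le hw hα hM hij hle) (by linarith)
  have hgains_j := hfix.gains_single hw hα hM (by linarith) hgap
    (hfix.nearlyTied_of_weight_le hw hα hM (hM.symm i j hij) (by rw [hw j i]; linarith))
    (by linarith)
  have hbound := (hgains_i.add hgains_j).sub_weight_add_gap_le hM hw (by linarith) hgap hij
    fun _ _ ↦ le_rfl
  linarith [hfix.le_earn_add_earn hw hα hadj]

theorem earn_eq_zero_of_unmatched (hw : ∀ i j, w i j = w j i) (hα : ValidMsg G α)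
    (hfix : IsEpsFixedPt G w α ε) (hM : IsMatching G M) (hgap : HasLPGap G w M g)
    (hg : 4 * (Fintype.card V + 1) ^ 2 * ε < g) (hi : ∀ j, ¬M i j) : earn G w α i = 0 := by
  refine ((earn_nonneg (w := w) hα i).eq_or_lt.resolve_right fun hpos ↦ ?_).symm
  obtain ⟨k, hk, hoffer⟩ := exists_eq_fmax_of_pos hpos
  have hik : G.Adj i k := (G.mem_neighborFinset i k).mp hk
  replace hoffer : offer w α k i = earn G w α i := hoffer
  have hε := hfix.nonneg hik
  have hcost : walkCost (Fintype.card V) (2 * ε + 2 * ε) ε + 3 * ε < g := by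
    refine lt_of_le_of_lt ?_ hg
    rw [walkCost, ← sub_nonneg]; ring_nf; positivity
  have hcost_nonneg : 0 ≤ walkCost (Fintype.card V) (2 * ε + 2 * ε) ε := by
    rw [walkCost]; positivity
  have hgains := hfix.gains_neg_single (δ := 2 * ε) hw hα hM (by linarith) hgap hik.symm
    (fun h ↦ hi k (hM.symm k i h))
    (by linarith [hfix.earn_sub_offer_le hw hα hik (hoffer ▸ hpos)]) (by linarith)
  have hbound := hgains.add_weight_add_gap_le hM hw (by linarith) hgap hik (hi k) fun a ha ↦ by
    have hai : a ≠ i := by rintro rfl; exact ha.elim hi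
    simp [Pi.single_eq_of_ne hai]
  linarith [hfix.earn_add_offer_le hw hα hik (hoffer ▸ hpos)]

theorem stable_earn (hw : ∀ i j, w i j = w j i) (hα : ValidMsg G α)
    (hfix : IsEpsFixedPt G w α ε) (hM : IsMatching G M) (hgap : HasLPGap G w M g)
    (hg : 4 * (Fintype.card V + 1) ^ 2 * ε < g) : Stable G w M (earn G w α) := by
  intro i j hij hMij
  by_contra! hlt
  have hε := hfix.nonneg hij
  have hcost : 2 * walkCost (Fintype.card V) (ε + 2 * ε) ε + 4 * ε < g := by
    refine lt_of_le_of_lt (le_of_eq ?_) hg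
    rw [walkCost]; ring
  have hcost_nonneg : 0 ≤ walkCost (Fintype.card V) (ε + 2 * ε) ε := by rw [walkCost]; positivity
  have hnear : earn G w α i ≤ offer w α j i + ε ∧ earn G w α j ≤ offer w α i j + ε := by
    rcases offer_cases hw hα hij with ⟨-, hoij, hoji⟩ | ⟨-, hoij, hoji⟩
    · linarith [offer_le_earn (w := w) (α := α) hij, offer_le_earn (w := w) (α := α) hij.symm]
    · have hji : w i j - α j i ≤ offer w α j i := hoji ▸ le_pos _
      have hij' : w i j - α i j ≤ offer w α i j := hoij ▸ le_pos _
      constructor <;> linarith [hfix.le_upd_add hij, hfix.le_upd_add hij.symm,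
        upd_le_earn (w := w) hα i j, upd_le_earn (w := w) hα j i]
  have hgains_i := hfix.gains_neg_single hw hα hM (by linarith) hgap hij hMij hnear.1 (by linarith)
  have hgains_j := hfix.gains_neg_single hw hα hM (by linarith) hgap hij.symm
    (fun h ↦ hMij (hM.symm j i h)) hnear.2 (by linarith)
  have hbound := (hgains_i.add hgains_j).add_weight_add_gap_le hM hw (by linarith) hgap hij hMij
    fun a _ ↦ by simp only [Pi.add_apply, Pi.neg_apply]; linarith
  linarith

theorem upd_lt_offer (hw : ∀ i j, w i j = w j i) (hα : ValidMsg G α)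
    (hfix : IsEpsFixedPt G w α ε) (hij : G.Adj i j) (hslack : α i j + α j i + 2 * ε < w i j) :
    upd G w α i j < offer w α j i := by
  rcases offer_cases hw hα hij with ⟨-, -, hoji⟩ | ⟨hle, -, -⟩ <;>
    linarith [hfix.upd_le_add hij, hfix.nonneg hij]

theorem abs_offer_sub_pos_le (hw : ∀ i j, w i j = w j i) (hα : ValidMsg G α)
    (hfix : IsEpsFixedPt G w α ε) (hij : G.Adj i j) (hstab : w i j ≤ earn G w α i + earn G w α j)
    (hi : earn G w α i = upd G w α i j) (hj : earn G w α j = upd G w α j i) :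
    |offer w α j i - pos (w i j - earn G w α j)| ≤ ε := by
  have hαij := hfix.upd_le_add hij
  have hαji := hfix j i hij.symm
  rcases offer_cases hw hα hij with ⟨hle, -, hoji⟩ | ⟨-, -, hoji⟩
  · have hlow := neg_le_of_abs_le hαji
    have hpos := le_pos (w i j - earn G w α j)
    have hnonneg := hα i j hij
    have hle_offer : pos (w i j - earn G w α j) ≤ offer w α j i + ε :=
      max_le (by linarith) (by linarith [hfix.nonneg hij])
    exact abs_le.mpr ⟨by linarith, by linarith⟩
  · rw [hoji]
    refine (abs_pos_sub_pos_le _ _).trans ?_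
    rwa [sub_sub_sub_cancel_left, abs_sub_comm, hj]

end IsEpsFixedPt

section Matched

variable {V : Type*} [Fintype V] [DecidableEq V] {G : SimpleGraph V} [DecidableRel G.Adj]
  {w α : V → V → ℝ} {M : V → V → Prop} {ε : ℝ} {i j k : V}

theorem earn_eq_offer (hα : ValidMsg G α) (hij : G.Adj i j)
    (hle : upd G w α i j ≤ offer w α j i) : earn G w α i = offer w α j i :=
  ((earn_le_max_upd_offer hα i j).trans_eq (max_eq_right hle)).antisymm (offer_le_earn hij)

theorem earn_eq_upd_of_not_mem (hα : ValidMsg G α) (hM : IsMatching G M)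
    (hbest : ∀ i j, M i j → upd G w α i j < offer w α j i)
    (hzero : ∀ i, (∀ j, ¬M i j) → earn G w α i = 0) (hij : ¬M i j) :
    earn G w α i = upd G w α i j := by
  refine le_antisymm ?_ (upd_le_earn hα i j)
  by_cases hmatched : ∃ l, M i l
  · obtain ⟨l, hil⟩ := hmatched
    rw [earn_eq_offer hα (hM.subset i l hil) (hbest i l hil).le]
    exact offer_le_upd (hM.subset i l hil) fun h ↦ hij (h ▸ hil)
  · rw [hzero i (not_exists.mp hmatched)]
    exact upd_nonneg hα i j

theorem IsEpsFixedPt.abs_upd_sub_bestAlt_le (hw : ∀ i j, w i j = w j i) (hα : ValidMsg G α)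
    (hfix : IsEpsFixedPt G w α ε) (hM : IsMatching G M) (hstab : Stable G w M (earn G w α))
    (hbest : ∀ i j, M i j → upd G w α i j < offer w α j i)
    (hzero : ∀ i, (∀ j, ¬M i j) → earn G w α i = 0) (hij : M i j) :
    |upd G w α i j - bestAlt G w (earn G w α) i j| ≤ ε := by
  have hadj {k : V} (hk : k ∈ (G.neighborFinset i).erase j) : G.Adj i k :=
    (G.mem_neighborFinset i k).mp (mem_of_mem_erase hk)
  refine abs_fmax_sub_fmax_le (hfix.nonneg (hM.subset i j hij))
    (fun k hk ↦ offer_nonneg (hα i k (hadj hk))) (fun k _ ↦ pos_nonneg _) fun k hk ↦ ?_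
  have hik : ¬M i k := fun h ↦ ne_of_mem_erase hk (hM.unique i k j h hij)
  exact hfix.abs_offer_sub_pos_le hw hα (hadj hk) (hstab i k (hadj hk) hik)
    (earn_eq_upd_of_not_mem hα hM hbest hzero hik)
    (earn_eq_upd_of_not_mem hα hM hbest hzero fun h ↦ hik (hM.symm k i h))

theorem induces_of_upd_lt_offer (hα : ValidMsg G α) (hM : IsMatching G M)
    (hbest : ∀ i j, M i j → upd G w α i j < offer w α j i)
    (hzero : ∀ i, (∀ j, ¬M i j) → earn G w α i = 0) : Induces G (offer w α) M := by
  refine ⟨hM, ?_, fun i hi j hij ↦ ?_⟩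
  · rintro i ⟨k, hik, hpos⟩
    by_cases hmatched : ∃ j, M i j
    · obtain ⟨j, hij⟩ := hmatched
      exact ⟨j, hij, fun l hil hlj ↦ (offer_le_upd hil hlj).trans_lt (hbest i j hij)⟩
    · exact absurd (hpos.trans_le (offer_le_earn hik))
        (hzero i (not_exists.mp hmatched)).le.not_gt
  · have hpos := (upd_nonneg hα i j).trans_lt (hbest i j hij)
    exact absurd hi (hpos.trans_le (offer_le_earn (hM.subset i j hij))).ne'

theorem IsEpsNB.mono {γ : V → ℝ} {ε' : ℝ} (h : IsEpsNB G w M γ ε) (hε : ε ≤ ε') :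
    IsEpsNB G w M γ ε' :=
  ⟨h.1, h.2.1, fun i j hij ↦ (h.2.2 i j hij).trans hε⟩

theorem IsEpsFixedPt.induces_and_isEpsNB {g : ℝ} (hw : ∀ i j, w i j = w j i) (hα : ValidMsg G α)
    (hfix : IsEpsFixedPt G w α ε) (hM : IsMatching G M) (hgap : HasLPGap G w M g)
    (hg : 4 * (Fintype.card V + 1) ^ 2 * ε < g) :
    Induces G (offer w α) M ∧ IsEpsNB G w M (earn G w α) (4 * ε) := by
  have hslack (i j : V) (hij : M i j) := hfix.add_lt_weight_of_matched hw hα hM hgap hg hij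
  have hstab := hfix.stable_earn hw hα hM hgap hg
  have hzero (i : V) (hi : ∀ j, ¬M i j) := hfix.earn_eq_zero_of_unmatched hw hα hM hgap hg hi
  have hbest (i j : V) (hij : M i j) :=
    hfix.upd_lt_offer hw hα (hM.subset i j hij) (hslack i j hij)
  have hearn (i j : V) (hij : M i j) : earn G w α i = (w i j - α j i + α i j) / 2 := by
    have hadj := hM.subset i j hij
    rw [earn_eq_offer hα hadj (hbest i j hij).le]
    rcases offer_cases hw hα hadj with ⟨-, -, hoji⟩ | ⟨hle, -, -⟩
    · exact hoji
    · linarith [hslack i j hij, hfix.nonneg hadj]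
  refine ⟨induces_of_upd_lt_offer hα hM hbest hzero,
    ⟨hM, earn_nonneg hα, fun i j hij ↦ ?_, hzero⟩, hstab, fun i j hij ↦ ?_⟩
  · rw [hearn i j hij, hearn j i (hM.symm i j hij), hw j i]
    ring
  · have hji := hM.symm i j hij
    have halt := abs_le.mp (hfix.abs_upd_sub_bestAlt_le hw hα hM hstab hbest hzero hij)
    have halt' := abs_le.mp (hfix.abs_upd_sub_bestAlt_le hw hα hM hstab hbest hzero hji)
    have hαij := abs_le.mp (hfix i j (hM.subset i j hij))
    have hαji := abs_le.mp (hfix j i (hM.subset j i hji))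
    have hdiff : earn G w α i - earn G w α j = α i j - α j i := by
      rw [hearn i j hij, hearn j i hji, hw j i]
      ring
    exact abs_le.mpr ⟨by linarith, by linarith⟩

end Matched

theorem four_mul_sq_mul_div_sqrt_lt {n B g q : ℝ} (hn : 2 ≤ n) (hB : 0 < B) (hg : 0 < g)
    (hq : 0 < q) (hle : 100 * n ^ 4 * B ^ 2 / g ^ 2 ≤ q) : 4 * (n + 1) ^ 2 * (B / √q) < g := by
  have hsqrt : 10 * n ^ 2 * B / g ≤ √q := by
    refine Real.le_sqrt_of_sq_le (le_of_eq_of_le ?_ hle)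
    ring
  have hcard : 4 * (n + 1) ^ 2 < 10 * n ^ 2 := by nlinarith
  rw [div_le_iff₀ hg] at hsqrt
  rw [← mul_div_assoc, div_lt_iff₀ (Real.sqrt_pos.mpr hq), mul_comm g]
  exact (mul_lt_mul_of_pos_right hcard hB).trans_le hsqrt

theorem induces_and_epsNB_after_Tstar_general
    {V : Type*} [Fintype V] [DecidableEq V] (G : SimpleGraph V) [DecidableRel G.Adj]
    (w : V → V → ℝ) (hw : ∀ i j, w i j = w j i) (B : ℝ) (hB : 0 < B)
    (hwB : ∀ i j, G.Adj i j → w i j ≤ B)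
    (M : V → V → Prop) (hM : IsMatching G M) (g : ℝ) (hg : 0 < g) (hgap : HasLPGap G w M g)
    (κ : ℝ) (hκ : κ ∈ Set.Ioo (0 : ℝ) 1)
    (α0 : V → V → ℝ) (hα0 : α0 ∈ messageBox G B) (t : ℕ)
    (ht : 100 * (Fintype.card V : ℝ) ^ 4 * B ^ 2 / (Real.pi * κ * (1 - κ) * g ^ 2) ≤ t) :
    Induces G (offer w (dyn G w κ α0 t)) M ∧
      IsEpsNB G w M (earn G w (dyn G w κ α0 t)) (4 * (B / √(Real.pi * κ * (1 - κ) * t))) := by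
  have hα : ValidMsg G (dyn G w κ α0 t) := fun i j hij ↦
    (dyn_mem_messageBox hwB (Set.Ioo_subset_Icc_self hκ) hα0 t i j hij).1
  by_cases hedge : ∃ i j, G.Adj i j
  · obtain ⟨i, j, hij⟩ := hedge
    have hcard : (2 : ℝ) ≤ Fintype.card V := by
      exact_mod_cast Fintype.one_lt_card_iff.mpr ⟨i, j, hij.ne⟩
    have hrate : 0 < Real.pi * κ * (1 - κ) :=
      mul_pos (mul_pos Real.pi_pos hκ.1) (sub_pos.mpr hκ.2)
    have htpos : (0 : ℝ) < t := lt_of_lt_of_le (by positivity) ht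
    refine (isEpsFixedPt_dyn hB.le hwB hκ hα0 (Nat.cast_pos.mp htpos)).induces_and_isEpsNB hw hα hM
      hgap (four_mul_sq_mul_div_sqrt_lt hcard hB hg (mul_pos hrate htpos) ?_)
    rwa [mul_comm _ (g ^ 2), ← div_div, div_le_iff₀' hrate] at ht
  · have hfix : IsEpsFixedPt G w (dyn G w κ α0 t) 0 := fun i j hij ↦ absurd ⟨i, j, hij⟩ hedge
    have hNB := hfix.induces_and_isEpsNB hw hα hM hgap (by simpa using hg)
    exact ⟨hNB.1, hNB.2.mono (by rw [mul_zero]; positivity)⟩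

/-- (Corollary of fast convergence.) With weights in `[0,1]`, a
unique integral LP optimum corresponding to `M*` and LP gap `g > 0`, for every
initial condition in `[0,1]^{2|E|}` and every `t ≥ T* = 100 n⁴/(π κ(1−κ) g²)`, the
iterate `α^t` induces `M*` and `(γ^t, M*)` is a `(6/√(π κ(1−κ) t))`-NB solution. -/
theorem induces_and_epsNB_after_Tstar
    {V : Type*} [Fintype V] [DecidableEq V] (G : SimpleGraph V) [DecidableRel G.Adj]
    (w : V → V → ℝ) (hw : GoodW G w) (hw1 : ∀ i j, G.Adj i j → w i j ≤ 1)
    (Mstar : V → V → Prop) (hM : IsMatching G Mstar)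
    (hopt : LPOptimal G w (mInd Mstar))
    (huniq : ∀ x, LPOptimal G w x → x = mInd Mstar)
    (g : ℝ) (hg : 0 < g)
    (hgap : ∀ x : V → V → ℝ, LPFeasible G x → HalfIntegral x → x ≠ mInd Mstar →
      LPval G w x + g ≤ LPval G w (mInd Mstar))
    (κ : ℝ) (hκ : κ ∈ Set.Ioo (0 : ℝ) 1)
    (α0 : V → V → ℝ) (hα0 : ∀ i j, G.Adj i j → α0 i j ∈ Set.Icc (0 : ℝ) 1) :
    ∀ t : ℕ,
      100 * (Fintype.card V : ℝ) ^ 4 / (Real.pi * κ * (1 - κ) * g ^ 2) ≤ t →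
      Induces G (offer w (dyn G w κ α0 t)) Mstar ∧
        IsEpsNB G w Mstar (earn G w (dyn G w κ α0 t))
          (6 / Real.sqrt (Real.pi * κ * (1 - κ) * t)) := by
  intro t ht
  have hNB := induces_and_epsNB_after_Tstar_general G w hw.1 1 one_pos hw1 Mstar hM g hg hgap κ hκ
    α0 hα0 t (by rwa [one_pow, mul_one])
  refine ⟨hNB.1, hNB.2.mono ?_⟩
  rw [mul_one_div]
  gcongr
  norm_num

end EN
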